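/- Let d ≥ 1, p ≥ 1, s ∈ (0,1), and let 1 ≤ k ≤ d be an integer. Assume α, β ∈ ℝ satisfy α, β, α+β ∈ (−k, sp). Set γ := (k+α+β−sp)/p, ω(x) := |x_k|^{−γ}, and k(x,y) := (1/2)|x−y|^{−d−sp}(|x_k|^α |y_k|^β + |x_k|^β |y_k|^α). Then 2 lim_{ε→0⁺} ∫_{{y ∈ ℝ^d : ||x_k|−|y_k|| > ε}} (ω(x)−ω(y)) |ω(x)−ω(y)|^{p−2} k(x,y) dy = 𝒞(d,s,p,k,α,β) |x_k|^{α+β−sp} ω(x)^{p−1}, and the convergence is uniform on compact subsets of ℝ^d \ K. -/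

import Mathlib

open MeasureTheory Real Set Filter Topology

noncomputable section

/-- Surface measure `|𝕊^m|` of the unit sphere `𝕊^m ⊆ ℝ^(m+1)`. -/
def sphereVol (m : ℕ) : ℝ :=
  2 * Real.pi ^ (((m : ℝ) + 1) / 2) / Real.Gamma (((m : ℝ) + 1) / 2)

/-- The profile function `Φ_{d,s,p}(r)`. -/
def Phi (d : ℕ) (s p r : ℝ) : ℝ :=
  if d = 1 then (1 - r) ^ (-1 - s * p) + (1 + r) ^ (-1 - s * p)
  else sphereVol (d - 2) *
    ∫ t in Icc (-1 : ℝ) 1,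
      (1 - t ^ 2) ^ (((d : ℝ) - 3) / 2) * (1 - 2 * t * r + r ^ 2) ^ (-(((d : ℝ) + s * p) / 2))

/-- The sharp constant `𝒞₁(d,s,p,α,β)` for the weighted fractional Hardy inequality with
point singularity. -/
def C1 (d : ℕ) (s p a b : ℝ) : ℝ :=
  ∫ r in Ioo (0 : ℝ) 1,
    r ^ (s * p - 1) * (r ^ (-a) + r ^ (-b)) *
      |1 - r ^ (((d : ℝ) + a + b - s * p) / p)| ^ p * Phi d s p r

/-- The sharp constant `𝒞(d,s,p,k,α,β)` for the weighted fractional Hardy inequality with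
singularity on a flat submanifold of codimension `k`. -/
def CC (d k : ℕ) (s p a b : ℝ) : ℝ :=
  Real.pi ^ (((d : ℝ) - (k : ℝ)) / 2) * Real.Gamma (((k : ℝ) + s * p) / 2) /
    Real.Gamma (((d : ℝ) + s * p) / 2) * C1 k s p a b

/-- `|x_k|`: the Euclidean norm of the vector of the first `k` coordinates of `x ∈ ℝ^d`. -/
def pnorm (d k : ℕ) (x : EuclideanSpace ℝ (Fin d)) : ℝ :=
  Real.sqrt (∑ i : Fin d, if (i : ℕ) < k then x i ^ 2 else 0)

/-!
The proof reduces the principal value to a one-dimensional one.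

Write `ρ = |x_k|` and `r = |y_k| / ρ`. By homogeneity the integrand is `ρ^{α+β} ω(x)^{p-1}` times a
function of `r` alone, times `|x - y|^{-d-sp}`, and the cutoff `||x_k| - |y_k|| > ε` becomes
`|1 - r| > ε / ρ`. Integrating the kernel over the `d - k` directions along `K`
(`lintegral_fiber`, a Gaussian computation) leaves a multiple of `|x_k - y_k|^{-k-sp}`. Averaging that
over spheres in `ℝᵏ` gives `Φ_{k,s,p}`, and the region `r > 1` is folded onto `u = 1 / r ∈ (0, 1)`
(`lintegral_normal`). These steps are identities between `[0, ∞]`-valued integrals for nonnegative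
functions of `r` (`lintegral_full`), and pass to the signed truncated integrand by integrability
(`integral_full`).

What remains is the integral over `u ∈ (0, 1)` of `m(u)` on `1 / u - 1 > δ` and of `-u^γ m(u)` on
`1 - u > δ`, where
`m(u) = u^{sp-1} (u^{-α} + u^{-β}) (1 - u^γ) |1 - u^γ|^{p-2} Φ_{k,s,p}(u)`.
The sum `(1 - u^γ) m(u)` is the integrand of `𝒞₁`. It is dominated by Beta densities, because `Φ`
blows up only like `(1 - u)^{-1-sp}` at `1` while `|1 - u^γ|^p = O((1 - u)^p)`. The two cutoffs differ
on an interval of length at most `δ²` at distance comparable to `δ` from `1`, where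
`m = O(δ^{p-2-sp})`, so the discrepancy is `O(δ^{p-sp})` (`tendsto_truncated`, `radial_limit`).

Since `x` enters only through a prefactor and through `δ = ε / |x_k|`, and since on a compact subset
of `ℝ^d \ K` the prefactor is bounded and `|x_k|` is bounded below, convergence is uniform there.
-/

/-! ### Gamma integrals and polar coordinates -/

theorem lintegral_gamma_kernel {q A : ℝ} (hq : 0 < q) (hA : 0 < A) :
    ∫⁻ τ in Ioi (0 : ℝ), ENNReal.ofReal (τ ^ (q - 1) * Real.exp (-(A * τ))) =
      ENNReal.ofReal (Real.Gamma q * A ^ (-q)) := by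
  have key := Real.integral_rpow_mul_exp_neg_mul_Ioi hq hA
  have hint : IntegrableOn (fun x : ℝ ↦ x ^ (q - 1) * rexp (-(A * x))) (Ioi 0) :=
    .of_integral_ne_zero (by
      rw [key]; have := Real.Gamma_pos_of_pos hq; positivity)
  rw [← ofReal_integral_eq_lintegral_ofReal hint, key]
  · rw [one_div, Real.inv_rpow hA.le, Real.rpow_neg hA.le, mul_comm]
  · filter_upwards [ae_restrict_mem measurableSet_Ioi] with t ht
    have : (0 : ℝ) < t := ht
    simp only [Pi.zero_apply]; positivity

/-- A negative power as a Laplace transform; under it, integrals of powers of sums factor. -/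
theorem ofReal_rpow_neg_eq {q A : ℝ} (hq : 0 < q) (hA : 0 < A) :
    ENNReal.ofReal (A ^ (-q)) = ENNReal.ofReal (Real.Gamma q)⁻¹ *
      ∫⁻ τ in Ioi (0 : ℝ), ENNReal.ofReal (τ ^ (q - 1) * Real.exp (-(A * τ))) := by
  have h := Real.Gamma_pos_of_pos hq
  rw [lintegral_gamma_kernel hq hA, ← ENNReal.ofReal_mul (by positivity)]
  congr 1; field_simp

/-- Integrating a power of `a + |z|²` over the directions `z` along the submanifold. The Laplace
representation turns it into a Gaussian integral, and the result is a power of `a` alone. -/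
theorem lintegral_fiber {ι : Type*} [Fintype ι] {q a : ℝ}
    (hq : 0 < q - (Fintype.card ι : ℝ) / 2) (ha : 0 < a) :
    ∫⁻ z : EuclideanSpace ℝ ι, ENNReal.ofReal ((a + ‖z‖ ^ 2) ^ (-q)) =
      ENNReal.ofReal (π ^ ((Fintype.card ι : ℝ) / 2) *
        Real.Gamma (q - (Fintype.card ι : ℝ) / 2) / Real.Gamma q *
        a ^ (-(q - (Fintype.card ι : ℝ) / 2))) := by
  set m : ℝ := (Fintype.card ι : ℝ) / 2 with hm
  have hm0 : 0 ≤ m := by positivity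
  have hq' : 0 < q := by linarith
  have hG := Real.Gamma_pos_of_pos hq'
  have hG' := Real.Gamma_pos_of_pos hq
  have e1 : ∀ z : EuclideanSpace ℝ ι, ENNReal.ofReal ((a + ‖z‖ ^ 2) ^ (-q)) =
      ENNReal.ofReal (Real.Gamma q)⁻¹ * ∫⁻ τ in Ioi (0 : ℝ),
        ENNReal.ofReal (τ ^ (q - 1) * Real.exp (-((a + ‖z‖ ^ 2) * τ))) := fun z =>
    ofReal_rpow_neg_eq hq' (by positivity)
  simp_rw [e1]
  rw [lintegral_const_mul' _ _ ENNReal.ofReal_ne_top]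
  rw [lintegral_lintegral_swap]
  swap
  · apply Measurable.aemeasurable
    apply ENNReal.measurable_ofReal.comp
    fun_prop
  have e2 : ∀ τ ∈ Ioi (0 : ℝ), ∫⁻ z : EuclideanSpace ℝ ι,
      ENNReal.ofReal (τ ^ (q - 1) * Real.exp (-((a + ‖z‖ ^ 2) * τ))) =
      ENNReal.ofReal (π ^ m) *
        ENNReal.ofReal (τ ^ (q - m - 1) * Real.exp (-(a * τ))) := by
    intro τ hτ
    have hτ : 0 < τ := hτ
    have h1 : ∀ z : EuclideanSpace ℝ ι, τ ^ (q - 1) * Real.exp (-((a + ‖z‖ ^ 2) * τ)) =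
        (τ ^ (q - 1) * Real.exp (-(a * τ))) * Real.exp (-τ * ‖z‖ ^ 2) := by
      intro z
      rw [mul_assoc, ← Real.exp_add]; ring_nf
    simp_rw [h1]
    have key := GaussianFourier.integral_rexp_neg_mul_sq_norm (V := EuclideanSpace ℝ ι) hτ
    have hint : Integrable (fun z : EuclideanSpace ℝ ι => Real.exp (-τ * ‖z‖ ^ 2)) :=
      .of_integral_ne_zero (by rw [key]; positivity)
    rw [← ofReal_integral_eq_lintegral_ofReal (hint.const_mul _)
      (Eventually.of_forall fun z => by positivity), integral_const_mul, key,
      ← ENNReal.ofReal_mul (by positivity)]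
    congr 1
    rw [finrank_euclideanSpace, ← hm, Real.div_rpow pi_pos.le hτ.le,
      show q - m - 1 = (q - 1) + -m by ring, Real.rpow_add hτ, Real.rpow_neg hτ.le]
    ring
  rw [setLIntegral_congr_fun measurableSet_Ioi e2, lintegral_const_mul' _ _ ENNReal.ofReal_ne_top,
    lintegral_gamma_kernel hq ha, ← ENNReal.ofReal_mul (by positivity),
    ← ENNReal.ofReal_mul (by positivity)]
  congr 1
  field_simp

/-- The Beta-type integral over the half-line. -/
theorem lintegral_beta_Ioi {a q A : ℝ} (ha : 0 < a) (hq : a < q) (hA : 0 < A) :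
    ∫⁻ w in Ioi (0 : ℝ), ENNReal.ofReal (w ^ (a - 1) * (A + w) ^ (-q)) =
      ENNReal.ofReal (Real.Gamma a * Real.Gamma (q - a) / Real.Gamma q * A ^ (-(q - a))) := by
  have hq' : 0 < q := by linarith
  have hqa : 0 < q - a := by linarith
  have hG := Real.Gamma_pos_of_pos hq'
  have hG1 := Real.Gamma_pos_of_pos ha
  have hG' := Real.Gamma_pos_of_pos hqa
  have e1 : ∀ w ∈ Ioi (0 : ℝ), ENNReal.ofReal (w ^ (a - 1) * (A + w) ^ (-q)) =
      ENNReal.ofReal (Real.Gamma q)⁻¹ * ∫⁻ τ in Ioi (0 : ℝ),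
        ENNReal.ofReal (w ^ (a - 1) * (τ ^ (q - 1) * Real.exp (-((A + w) * τ)))) := by
    intro w hw
    have hw : 0 < w := hw
    have : 0 ≤ w ^ (a - 1) := by positivity
    simp_rw [ENNReal.ofReal_mul this]
    rw [lintegral_const_mul' _ _ ENNReal.ofReal_ne_top,
      ofReal_rpow_neg_eq hq' (show 0 < A + w by positivity)]
    ring
  rw [setLIntegral_congr_fun measurableSet_Ioi e1, lintegral_const_mul' _ _ ENNReal.ofReal_ne_top,
    lintegral_lintegral_swap]
  swap
  · apply Measurable.aemeasurable
    apply ENNReal.measurable_ofReal.comp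
    fun_prop
  have e2 : ∀ τ ∈ Ioi (0 : ℝ), ∫⁻ w in Ioi (0 : ℝ),
      ENNReal.ofReal (w ^ (a - 1) * (τ ^ (q - 1) * Real.exp (-((A + w) * τ)))) =
      ENNReal.ofReal (Real.Gamma a) *
        ENNReal.ofReal (τ ^ (q - a - 1) * Real.exp (-(A * τ))) := by
    intro τ hτ
    have hτ : 0 < τ := hτ
    have h1 : ∀ w : ℝ, w ^ (a - 1) * (τ ^ (q - 1) * Real.exp (-((A + w) * τ))) =
        (τ ^ (q - 1) * Real.exp (-(A * τ))) * (w ^ (a - 1) * Real.exp (-(τ * w))) := by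
      intro w
      rw [show -((A + w) * τ) = -(A * τ) + -(τ * w) by ring, Real.exp_add]; ring
    have h2 : 0 ≤ τ ^ (q - 1) * Real.exp (-(A * τ)) := by positivity
    simp_rw [h1, ENNReal.ofReal_mul h2]
    rw [lintegral_const_mul' _ _ ENNReal.ofReal_ne_top, lintegral_gamma_kernel ha hτ,
      ← ENNReal.ofReal_mul h2, ← ENNReal.ofReal_mul hG1.le]
    congr 1
    rw [show q - a - 1 = (q - 1) + -a by ring, Real.rpow_add hτ]
    ring
  rw [setLIntegral_congr_fun measurableSet_Ioi e2, lintegral_const_mul' _ _ ENNReal.ofReal_ne_top,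
    lintegral_gamma_kernel hqa hA, ← ENNReal.ofReal_mul (by positivity),
    ← ENNReal.ofReal_mul (by positivity)]
  congr 1
  field_simp

/-- Polar coordinates for nonnegative radial functions. -/
theorem lintegral_radial {ι : Type*} [Fintype ι] [Nonempty ι] (f : ℝ → ENNReal)
    (hf : Measurable f) :
    ∫⁻ x : EuclideanSpace ℝ ι, f ‖x‖ = ENNReal.ofReal (sphereVol (Fintype.card ι - 1)) *
      ∫⁻ r in Ioi (0 : ℝ), ENNReal.ofReal (r ^ (Fintype.card ι - 1)) * f r := by
  set E := EuclideanSpace ℝ ι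
  set μ : Measure E := volume
  have hE : Module.finrank ℝ E = Fintype.card ι := finrank_euclideanSpace
  have hmp := μ.measurePreserving_homeomorphUnitSphereProd
  have hS : μ.toSphere univ = ENNReal.ofReal (sphereVol (Fintype.card ι - 1)) := by
    rw [Measure.toSphere_apply_univ, hE]
    simp only [μ]
    rw [EuclideanSpace.volume_ball]
    have hc : 0 < Fintype.card ι := Fintype.card_pos
    have hc' : (0:ℝ) < (Fintype.card ι : ℝ) := by exact_mod_cast hc
    simp only [ENNReal.ofReal_one, one_pow, one_mul]
    rw [← ENNReal.ofReal_natCast, ← ENNReal.ofReal_mul (by positivity)]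
    congr 1
    unfold sphereVol
    rw [Nat.cast_pred hc, sub_add_cancel, Real.Gamma_add_one (by positivity),
      Real.sqrt_eq_rpow, ← Real.rpow_natCast, ← Real.rpow_mul pi_pos.le]
    rw [show 1 / 2 * (Fintype.card ι : ℝ) = (Fintype.card ι : ℝ) / 2 by ring]
    have := Real.Gamma_pos_of_pos (show 0 < (Fintype.card ι : ℝ) / 2 by positivity)
    field_simp
  calc
    ∫⁻ x, f ‖x‖ ∂μ = ∫⁻ x in ({(0 : E)}ᶜ : Set E), f ‖x‖ ∂μ := by
      rw [restrict_compl_singleton]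
    _ = ∫⁻ x : ({(0 : E)}ᶜ : Set E), f ‖x.1‖ ∂(μ.comap (↑)) := by
      rw [lintegral_subtype_comap (measurableSet_singleton _).compl (fun x => f ‖x‖)]
    _ = ∫⁻ x, f x.2 ∂μ.toSphere.prod (.volumeIoiPow (Module.finrank ℝ E - 1)) := by
      have h := hmp.lintegral_comp (hf.comp (measurable_subtype_coe.comp measurable_snd))
      simp only [Function.comp_def, homeomorphUnitSphereProd_apply_snd_coe] at h
      exact h
    _ = _ := by
      have hfm : Measurable (fun x : Metric.sphere (0 : E) 1 × Ioi (0 : ℝ) => f x.2) :=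
        hf.comp (measurable_subtype_coe.comp measurable_snd)
      rw [lintegral_prod_symm _ hfm.aemeasurable]
      simp only [lintegral_const]
      have hfm' : Measurable (fun r : Ioi (0 : ℝ) => f r) := hf.comp measurable_subtype_coe
      rw [lintegral_mul_const _ hfm', hS, mul_comm, Measure.volumeIoiPow,
        lintegral_withDensity_eq_lintegral_mul _ (by fun_prop) hfm']
      simp only [Pi.mul_apply]
      rw [hE, ← lintegral_subtype_comap measurableSet_Ioi
        (fun r : ℝ => ENNReal.ofReal (r ^ (Fintype.card ι - 1)) * f r)]

/-! ### Axially symmetric integration -/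

/-- Orthogonal splitting along a unit vector `e`: `a` is the coordinate along `e` and `b` the
component in the hyperplane orthogonal to `e`, identified with `ℝⁿ`. -/
theorem lintegral_split_direction {ι : Type*} [Fintype ι] {n : ℕ}
    (hn : Fintype.card ι = n + 1) (G : ℝ → ℝ → ENNReal) (hG : Measurable (Function.uncurry G))
    (e : EuclideanSpace ℝ ι) (he : ‖e‖ = 1) :
    ∫⁻ v : EuclideanSpace ℝ ι, G ‖v‖ (inner ℝ e v) =
      ∫⁻ a : ℝ, ∫⁻ b : EuclideanSpace ℝ (Fin n), G (√(a ^ 2 + ‖b‖ ^ 2)) a := by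
  obtain ⟨B, hB⟩ : ∃ B : OrthonormalBasis (Fin (n + 1)) ℝ (EuclideanSpace ℝ ι), B 0 = e := by
    have h0 : Orthonormal ℝ (({0} : Set (Fin (n + 1))).domRestrict
        (fun _ : Fin (n + 1) => e)) := by
      refine ⟨fun i => by simpa using he, fun i j hij => ?_⟩
      exact absurd (Subsingleton.elim i j) hij
    obtain ⟨B, hB⟩ := h0.exists_orthonormalBasis_extension_of_card_eq
      (by rw [finrank_euclideanSpace, hn, Fintype.card_fin])
    exact ⟨B, hB 0 rfl⟩
  have m1 := B.repr.measurePreserving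
  have m2 := PiLp.volume_preserving_ofLp (Fin (n + 1))
  have m3 := volume_preserving_piFinSuccAbove (fun _ : Fin (n + 1) => ℝ) 0
  have m4 := (MeasurePreserving.id (volume : Measure ℝ)).prod (PiLp.volume_preserving_toLp (Fin n))
  have m := m4.comp (m3.comp (m2.comp m1))
  have hm : Measurable (fun z : ℝ × EuclideanSpace ℝ (Fin n) =>
      G (√(z.1 ^ 2 + ‖z.2‖ ^ 2)) z.1) := by
    exact hG.comp (f := fun z : ℝ × EuclideanSpace ℝ (Fin n) =>
      ((√(z.1 ^ 2 + ‖z.2‖ ^ 2), z.1) : ℝ × ℝ)) (by fun_prop)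
  have key := m.lintegral_comp hm
  rw [lintegral_prod _ hm.aemeasurable] at key
  rw [← key]
  refine lintegral_congr fun v => ?_
  have c0 : inner ℝ e v = B.repr v 0 := by rw [OrthonormalBasis.repr_apply_apply, hB]
  have c1 : ‖v‖ ^ 2 = (B.repr v 0) ^ 2 + ∑ i : Fin n, (B.repr v i.succ) ^ 2 := by
    rw [← B.repr.norm_map v, EuclideanSpace.norm_sq_eq, Fin.sum_univ_succ]
    simp
  have c2 : ‖v‖ = √(‖v‖ ^ 2) := (Real.sqrt_sq (norm_nonneg v)).symm
  rw [c2, c1, c0]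
  simp [EuclideanSpace.norm_sq_eq, MeasurableEquiv.piFinSuccAbove, Fin.tail]

/-- Integration in dimension `n + 2` of a function of `|v|` and of the component of `v` along `e`:
`t` is the cosine of the angle between `v` and `e`, and the remaining `𝕊ⁿ` directions contribute
the weight `(1 - t²)^((n - 1) / 2)`. -/
theorem lintegral_axial {ι : Type*} [Fintype ι] {n : ℕ}
    (hn : Fintype.card ι = n + 2) (G : ℝ → ℝ → ENNReal) (hG : Measurable (Function.uncurry G))
    (e : EuclideanSpace ℝ ι) (he : ‖e‖ = 1) :
    ∫⁻ v : EuclideanSpace ℝ ι, G ‖v‖ (inner ℝ e v) =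
      ENNReal.ofReal (sphereVol n) * ∫⁻ r in Ioi (0 : ℝ), ENNReal.ofReal (r ^ (n + 1)) *
        ∫⁻ t in Ioo (-1 : ℝ) 1, ENNReal.ofReal ((1 - t ^ 2) ^ (((n : ℝ) - 1) / 2)) *
          G r (r * t) := by
  rw [lintegral_split_direction hn G hG e he]
  have h1 : ∀ a : ℝ, ∫⁻ b : EuclideanSpace ℝ (Fin (n + 1)), G (√(a ^ 2 + ‖b‖ ^ 2)) a =
      ENNReal.ofReal (sphereVol n) *
        ∫⁻ w in Ioi (0 : ℝ), ENNReal.ofReal (w ^ n) * G (√(a ^ 2 + w ^ 2)) a := by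
    intro a
    have := lintegral_radial (ι := Fin (n + 1)) (fun w => G (√(a ^ 2 + w ^ 2)) a)
      (hG.comp (f := fun w : ℝ => ((√(a ^ 2 + w ^ 2), a) : ℝ × ℝ)) (by fun_prop))
    simpa using this
  simp_rw [h1]
  rw [lintegral_const_mul' _ _ ENNReal.ofReal_ne_top]
  congr 1
  set f : ℝ × ℝ → ENNReal := fun z => (Ioi (0 : ℝ)).indicator
    (fun w => ENNReal.ofReal (w ^ n) * G (√(z.1 ^ 2 + w ^ 2)) z.1) z.2 with hf
  have hfm : Measurable f := by
    have : f = (Prod.snd ⁻¹' (Ioi (0 : ℝ))).indicator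
        (fun z : ℝ × ℝ => ENNReal.ofReal (z.2 ^ n) * G (√(z.1 ^ 2 + z.2 ^ 2)) z.1) := by
      ext z; simp [hf, indicator]
    rw [this]
    refine Measurable.indicator ?_ (measurable_snd measurableSet_Ioi)
    refine Measurable.mul (by fun_prop) ?_
    exact hG.comp (f := fun z : ℝ × ℝ => ((√(z.1 ^ 2 + z.2 ^ 2), z.1) : ℝ × ℝ)) (by fun_prop)
  have h2 : ∫⁻ a : ℝ, ∫⁻ w in Ioi (0 : ℝ), ENNReal.ofReal (w ^ n) * G (√(a ^ 2 + w ^ 2)) a =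
      ∫⁻ z, f z := by
    rw [Measure.volume_eq_prod, lintegral_prod _ hfm.aemeasurable]
    refine lintegral_congr fun a => ?_
    rw [← lintegral_indicator measurableSet_Ioi]
  have hpm : Measurable (fun p : ℝ × ℝ => ENNReal.ofReal p.1 • f (polarCoord.symm p)) := by
    have : Measurable (fun p : ℝ × ℝ => polarCoord.symm p) := by
      simp only [polarCoord_symm_apply]; fun_prop
    simp only [smul_eq_mul]
    exact (ENNReal.measurable_ofReal.comp measurable_fst).mul (hfm.comp this)
  rw [h2, ← lintegral_comp_polarCoord_symm, polarCoord_target, Measure.volume_eq_prod,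
    setLIntegral_prod _ hpm.aemeasurable]
  refine setLIntegral_congr_fun measurableSet_Ioi fun r hr => ?_
  have hr : 0 < r := hr
  -- the substitution `t = cos θ`
  have himg : cos '' Ioo 0 π = Ioo (-1) 1 := by
    ext t
    constructor
    · rintro ⟨θ, hθ, rfl⟩
      have h0 := strictAntiOn_cos (left_mem_Icc.2 pi_pos.le) (Ioo_subset_Icc_self hθ) hθ.1
      have h1 := strictAntiOn_cos (Ioo_subset_Icc_self hθ) (right_mem_Icc.2 pi_pos.le) hθ.2
      rw [cos_zero] at h0
      rw [cos_pi] at h1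
      exact ⟨h1, h0⟩
    · rintro ⟨h0, h1⟩
      refine ⟨arccos t, ⟨arccos_pos.2 h1, ?_⟩, cos_arccos h0.le h1.le⟩
      refine lt_of_le_of_ne (arccos_le_pi t) fun h => ?_
      rw [arccos_eq_pi] at h
      linarith
  have h3 := lintegral_image_eq_lintegral_abs_deriv_mul (s := Ioo 0 π) (f := cos)
    (f' := fun θ => -sin θ) measurableSet_Ioo
    (fun θ _ => (hasDerivAt_cos θ).hasDerivWithinAt)
    (injOn_cos.mono Ioo_subset_Icc_self)
    (fun t => ENNReal.ofReal ((1 - t ^ 2) ^ (((n : ℝ) - 1) / 2)) * G r (r * t))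
  rw [himg] at h3
  rw [h3]
  have h4 : ∫⁻ θ in Ioo (-π) π, ENNReal.ofReal r • f (polarCoord.symm (r, θ)) =
      ∫⁻ θ in Ioo 0 π, ENNReal.ofReal r • f (polarCoord.symm (r, θ)) := by
    rw [← lintegral_indicator measurableSet_Ioo, ← lintegral_indicator measurableSet_Ioo]
    refine lintegral_congr fun θ => ?_
    by_cases h : θ ∈ Ioo 0 π
    · have h' : θ ∈ Ioo (-π) π := ⟨by linarith [h.1, pi_pos], h.2⟩
      rw [indicator_of_mem h, indicator_of_mem h']
    · rw [indicator_of_notMem h]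
      by_cases h' : θ ∈ Ioo (-π) π
      · rw [indicator_of_mem h']
        have hθ : θ ≤ 0 := by
          by_contra hc; exact h ⟨not_le.1 hc, h'.2⟩
        have : ¬ (0 < r * sin θ) := by
          have := sin_nonpos_of_nonpos_of_neg_pi_le hθ h'.1.le
          nlinarith
        simp [hf, polarCoord_symm_apply, this]
      · rw [indicator_of_notMem h']
  simp only
  rw [h4, ← lintegral_const_mul' _ _ ENNReal.ofReal_ne_top]
  refine setLIntegral_congr_fun measurableSet_Ioo fun θ hθ => ?_
  have hs : 0 < sin θ := sin_pos_of_mem_Ioo hθ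
  have hrs : 0 < r * sin θ := by positivity
  have hsq : √((r * cos θ) ^ 2 + (r * sin θ) ^ 2) = r := by
    rw [show (r * cos θ) ^ 2 + (r * sin θ) ^ 2 = r ^ 2 * (sin θ ^ 2 + cos θ ^ 2) by ring,
      sin_sq_add_cos_sq, mul_one, Real.sqrt_sq hr.le]
  have hpow : (1 - cos θ ^ 2) ^ (((n : ℝ) - 1) / 2) * sin θ = sin θ ^ n := by
    rw [← sin_sq, ← Real.rpow_natCast (sin θ) 2, ← Real.rpow_mul hs.le]
    nth_rewrite 2 [← Real.rpow_one (sin θ)]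
    rw [← Real.rpow_add hs, ← Real.rpow_natCast]
    congr 1; push_cast; ring
  simp only [polarCoord_symm_apply, hf, smul_eq_mul]
  rw [indicator_of_mem (by exact hrs), hsq, abs_neg, abs_of_pos hs]
  have hn0 : 0 ≤ (1 - cos θ ^ 2) ^ (((n : ℝ) - 1) / 2) := by
    apply Real.rpow_nonneg; nlinarith [cos_sq_le_one θ]
  simp only [← mul_assoc]
  rw [← ENNReal.ofReal_mul hr.le, ← ENNReal.ofReal_mul (by positivity),
    ← ENNReal.ofReal_mul (by positivity)]
  congr 2
  rw [mul_pow, ← hpow]; ring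

/-! ### The profile function and inversion -/

theorem sphereVol_nonneg (m : ℕ) : 0 ≤ sphereVol m := by
  unfold sphereVol
  have := Real.Gamma_pos_of_pos (show 0 < ((m : ℝ) + 1) / 2 by positivity)
  positivity

theorem kernel_poly_pos {u t : ℝ} (hu : u ∈ Ioo (0 : ℝ) 1) (ht : t ∈ Ioo (-1 : ℝ) 1) :
    0 < 1 - 2 * t * u + u ^ 2 := by
  have h1 : 0 < 1 - u := by linarith [hu.2]
  nlinarith [mul_pos hu.1 (show 0 < 1 - t by linarith [ht.2]), pow_pos h1 2]

/-- Pointwise domination of the integrand of `Φ` by a Beta-type integrand in `1 - |t|`. -/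
theorem phi_integrand_le {a q u t : ℝ} (ha : 0 < a) (hq : 0 < q)
    (hu : u ∈ Ioo (0 : ℝ) 1) (ht : t ∈ Ioo (-1 : ℝ) 1) :
    (1 - t ^ 2) ^ (a - 1) * (1 - 2 * t * u + u ^ 2) ^ (-q) ≤
      (2 ^ a * 16 ^ q) * ((1 - |t|) ^ (a - 1) * ((1 - u) ^ 2 + (1 - |t|)) ^ (-q)) := by
  have hat : |t| < 1 := abs_lt.2 ht
  have hat0 : 0 ≤ |t| := abs_nonneg t
  have htt : t ≤ |t| := le_abs_self t
  have hw : 0 < 1 - |t| := by linarith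
  have hu0 := hu.1
  have hu1 : 0 < 1 - u := by linarith [hu.2]
  have h1 : (1 - t ^ 2) ^ (a - 1) ≤ 2 ^ a * (1 - |t|) ^ (a - 1) := by
    have : 1 - t ^ 2 = (1 + |t|) * (1 - |t|) := by rw [← sq_abs t]; ring
    rw [this, Real.mul_rpow (by positivity) hw.le]
    gcongr
    calc (1 + |t|) ^ (a - 1) ≤ (1 + |t|) ^ a :=
          Real.rpow_le_rpow_of_exponent_le (by linarith) (by linarith)
      _ ≤ 2 ^ a := Real.rpow_le_rpow (by positivity) (by linarith) ha.le
  have h2 : ((1 - u) ^ 2 + (1 - |t|)) / 16 ≤ 1 - 2 * t * u + u ^ 2 := by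
    have h3 : u * t ≤ u * |t| := by gcongr
    rcases le_or_gt (1 / 2) u with h | h
    · nlinarith [mul_nonneg (sub_nonneg.2 h) hw.le, sq_nonneg (1 - u)]
    · nlinarith [mul_nonneg hu0.le hw.le]
  have h4 : (1 - 2 * t * u + u ^ 2) ^ (-q) ≤ 16 ^ q * ((1 - u) ^ 2 + (1 - |t|)) ^ (-q) := by
    calc (1 - 2 * t * u + u ^ 2) ^ (-q) ≤ (((1 - u) ^ 2 + (1 - |t|)) / 16) ^ (-q) :=
          Real.rpow_le_rpow_of_nonpos (by positivity) h2 (by linarith)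
      _ = _ := by
        rw [Real.div_rpow (by positivity) (by norm_num), Real.rpow_neg (by norm_num : (0:ℝ) ≤ 16)]
        field_simp
  calc _ ≤ (2 ^ a * (1 - |t|) ^ (a - 1)) * (16 ^ q * ((1 - u) ^ 2 + (1 - |t|)) ^ (-q)) := by
        have : 0 ≤ (1 - 2 * t * u + u ^ 2) ^ (-q) := Real.rpow_nonneg (kernel_poly_pos hu ht).le _
        gcongr
    _ = _ := by ring

/-- The integral defining `Φ` blows up at most like `(1 - u)^{-2(q - a)}`; with `a = (d - 1) / 2` and
`q = (d + sp) / 2` the exponent is `-1 - sp`. -/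
theorem lintegral_phi_le {a q : ℝ} (ha : 0 < a) (hq : a < q) :
    ∃ C : ℝ, 0 ≤ C ∧ ∀ u ∈ Ioo (0 : ℝ) 1,
      ∫⁻ t in Ioo (-1 : ℝ) 1,
        ENNReal.ofReal ((1 - t ^ 2) ^ (a - 1) * (1 - 2 * t * u + u ^ 2) ^ (-q)) ≤
      ENNReal.ofReal (C * (1 - u) ^ (-(2 * (q - a)))) := by
  have hq' : 0 < q := by linarith
  have g1 := Real.Gamma_pos_of_pos ha
  have g2 := Real.Gamma_pos_of_pos hq'
  have g3 := Real.Gamma_pos_of_pos (show 0 < q - a by linarith)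
  refine ⟨2 * ((2 ^ a * 16 ^ q) * (Real.Gamma a * Real.Gamma (q - a) / Real.Gamma q)),
    by positivity, fun u hu => ?_⟩
  have hu1 : 0 < 1 - u := by linarith [hu.2]
  set H : ℝ → ENNReal := (Ioi (0 : ℝ)).indicator
    (fun w => ENNReal.ofReal (w ^ (a - 1) * ((1 - u) ^ 2 + w) ^ (-q))) with hH
  have hHm : Measurable H := by
    refine Measurable.indicator ?_ measurableSet_Ioi
    apply ENNReal.measurable_ofReal.comp
    fun_prop
  have hHi : ∫⁻ w, H w = ENNReal.ofReal
      (Real.Gamma a * Real.Gamma (q - a) / Real.Gamma q * (1 - u) ^ (-(2 * (q - a)))) := by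
    rw [hH, lintegral_indicator measurableSet_Ioi, lintegral_beta_Ioi ha hq (by positivity),
      ← Real.rpow_natCast (1 - u) 2, ← Real.rpow_mul hu1.le]
    congr 3; push_cast; ring
  have i1 : ∫⁻ t : ℝ, H (1 - t) = ∫⁻ w, H w := lintegral_sub_left_eq_self H 1
  have i2 : ∫⁻ t : ℝ, H (1 + t) = ∫⁻ w, H w := lintegral_add_left_eq_self H 1
  calc _ ≤ ∫⁻ t in Ioo (-1 : ℝ) 1, ENNReal.ofReal (2 ^ a * 16 ^ q) * (H (1 - t) + H (1 + t)) := by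
        refine setLIntegral_mono' measurableSet_Ioo fun t ht => ?_
        refine (ENNReal.ofReal_le_ofReal (phi_integrand_le ha hq' hu ht)).trans ?_
        rw [ENNReal.ofReal_mul (by positivity)]
        gcongr
        have hat : 0 < 1 - |t| := by have := abs_lt.2 ht; linarith
        have e : ENNReal.ofReal ((1 - |t|) ^ (a - 1) * ((1 - u) ^ 2 + (1 - |t|)) ^ (-q)) =
            H (1 - |t|) := by
          rw [hH, indicator_of_mem (by exact hat)]
        rw [e]
        rcases abs_choice t with h | h <;> rw [h]
        · exact le_self_add
        · rw [sub_neg_eq_add]; exact le_add_self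
    _ ≤ ∫⁻ t : ℝ, ENNReal.ofReal (2 ^ a * 16 ^ q) * (H (1 - t) + H (1 + t)) :=
        setLIntegral_le_lintegral _ _
    _ = _ := by
        rw [lintegral_const_mul' _ _ ENNReal.ofReal_ne_top, lintegral_add_left (by fun_prop),
          i1, i2, hHi, ← two_mul, ← ENNReal.ofReal_ofNat, ← ENNReal.ofReal_mul (by positivity),
          ← ENNReal.ofReal_mul (by positivity)]
        congr 1; ring

/-- For `d = n + 2`, the profile `Φ` as a nonnegative Lebesgue integral. -/
theorem phi_eq_toReal (n : ℕ) (s p u : ℝ) (hu : u ∈ Ioo (0 : ℝ) 1) :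
    Phi (n + 2) s p u = sphereVol n * (∫⁻ t in Ioo (-1 : ℝ) 1,
      ENNReal.ofReal ((1 - t ^ 2) ^ (((n : ℝ) - 1) / 2) *
        (1 - 2 * t * u + u ^ 2) ^ (-(((n : ℝ) + 2 + s * p) / 2)))).toReal := by
  unfold Phi
  rw [if_neg (by omega), Nat.add_sub_cancel]
  congr 1
  rw [integral_Icc_eq_integral_Ioo, integral_eq_lintegral_of_nonneg_ae]
  · push_cast
    rw [show (n : ℝ) + 2 - 3 = n - 1 by ring]
  · filter_upwards [ae_restrict_mem measurableSet_Ioo] with t ht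
    have h1 : 0 ≤ 1 - t ^ 2 := by nlinarith [ht.1, ht.2]
    exact mul_nonneg (Real.rpow_nonneg h1 _) (Real.rpow_nonneg (kernel_poly_pos hu ht).le _)
  · apply Measurable.aestronglyMeasurable
    fun_prop

/-- `Φ` is nonnegative and blows up at most like `(1 - r)^{-1 - sp}` at `r = 1`. -/
theorem phi_bound (d : ℕ) (hd : 1 ≤ d) (s p : ℝ) (hσ : 0 < s * p) :
    ∃ C : ℝ, 0 ≤ C ∧ ∀ u ∈ Ioo (0 : ℝ) 1,
      0 ≤ Phi d s p u ∧ Phi d s p u ≤ C * (1 - u) ^ (-1 - s * p) := by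
  obtain rfl | ⟨n, rfl⟩ : d = 1 ∨ ∃ n, d = n + 2 := by
    rcases Nat.lt_or_ge d 2 with h | h
    · left; omega
    · right; exact ⟨d - 2, by omega⟩
  · refine ⟨2, by norm_num, fun u hu => ?_⟩
    have hu1 : 0 < 1 - u := by linarith [hu.2]
    have hu2 : 0 < 1 + u := by linarith [hu.1]
    simp only [Phi, if_true]
    refine ⟨by positivity, ?_⟩
    have := Real.rpow_le_rpow_of_nonpos hu1 (show 1 - u ≤ 1 + u by linarith [hu.1])
      (show -1 - s * p ≤ 0 by linarith)
    linarith
  · obtain ⟨C, hC, h⟩ := lintegral_phi_le (a := ((n : ℝ) + 1) / 2)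
      (q := ((n : ℝ) + 2 + s * p) / 2) (by positivity) (by linarith)
    have hS := sphereVol_nonneg n
    refine ⟨sphereVol n * C, by positivity, fun u hu => ?_⟩
    rw [phi_eq_toReal n s p u hu]
    refine ⟨by positivity, ?_⟩
    rw [mul_assoc]
    refine mul_le_mul_of_nonneg_left ?_ hS
    have hu1 : 0 < 1 - u := by linarith [hu.2]
    refine ENNReal.toReal_le_of_le_ofReal (by positivity) ?_
    have := h u hu
    rw [show ((n : ℝ) + 1) / 2 - 1 = ((n : ℝ) - 1) / 2 by ring,
      show -(2 * (((n : ℝ) + 2 + s * p) / 2 - ((n : ℝ) + 1) / 2)) = -1 - s * p by ring] at this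
    exact this

/-- Unlike `phi_eq_toReal`, this also records that the Lebesgue integral is finite. -/
theorem ofReal_phi (n : ℕ) (s p u : ℝ) (hσ : 0 < s * p) (hu : u ∈ Ioo (0 : ℝ) 1) :
    ENNReal.ofReal (Phi (n + 2) s p u) = ENNReal.ofReal (sphereVol n) * ∫⁻ t in Ioo (-1 : ℝ) 1,
      ENNReal.ofReal ((1 - t ^ 2) ^ (((n : ℝ) - 1) / 2) *
        (1 - 2 * t * u + u ^ 2) ^ (-(((n : ℝ) + 2 + s * p) / 2))) := by
  obtain ⟨C, hC, h⟩ := lintegral_phi_le (a := ((n : ℝ) + 1) / 2)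
    (q := ((n : ℝ) + 2 + s * p) / 2) (by positivity) (by linarith)
  have := h u hu
  rw [show ((n : ℝ) + 1) / 2 - 1 = ((n : ℝ) - 1) / 2 by ring] at this
  rw [phi_eq_toReal n s p u hu, ENNReal.ofReal_mul (sphereVol_nonneg n),
    ENNReal.ofReal_toReal (this.trans_lt ENNReal.ofReal_lt_top).ne]

/-- Radial splitting at `r = ρ`: the outer region is folded into the inner one by `r ↦ ρ² / r`. -/
theorem lintegral_fold {ρ : ℝ} (hρ : 0 < ρ) (f : ℝ → ENNReal) (hf : Measurable f) :
    ∫⁻ r in Ioi (0 : ℝ), f r = ∫⁻ u in Ioo (0 : ℝ) 1,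
      (ENNReal.ofReal ρ * f (ρ * u) + ENNReal.ofReal (ρ / u ^ 2) * f (ρ / u)) := by
  rw [lintegral_add_left (by fun_prop)]
  rw [← Ioc_union_Ioi_eq_Ioi hρ.le, lintegral_union measurableSet_Ioi Ioc_disjoint_Ioi_same]
  congr 1
  · rw [Measure.restrict_congr_set Ioo_ae_eq_Ioc.symm]
    have himg : (fun u => ρ * u) '' Ioo 0 1 = Ioo 0 ρ := by
      rw [image_mul_left_Ioo hρ]; simp
    have := lintegral_image_eq_lintegral_abs_deriv_mul (s := Ioo 0 1) (f := fun u => ρ * u)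
      (f' := fun _ => ρ) measurableSet_Ioo
      (fun u _ => by simpa using ((hasDerivAt_id u).const_mul ρ).hasDerivWithinAt)
      (fun x _ y _ h => mul_left_cancel₀ hρ.ne' h) f
    rw [himg, abs_of_pos hρ] at this
    exact this
  · have himg : (fun u => ρ / u) '' Ioo 0 1 = Ioi ρ := by
      ext r
      constructor
      · rintro ⟨u, hu, rfl⟩
        show ρ < ρ / u
        rw [lt_div_iff₀ hu.1]
        nlinarith [hu.2]
      · intro hr
        have hr : ρ < r := hr
        have hr0 : 0 < r := hρ.trans hr
        refine ⟨ρ / r, ⟨by positivity, (div_lt_one hr0).2 hr⟩, ?_⟩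
        simp only; field_simp
    have := lintegral_image_eq_lintegral_abs_deriv_mul (s := Ioo 0 1) (f := fun u => ρ / u)
      (f' := fun u => -(ρ / u ^ 2)) measurableSet_Ioo
      (fun u hu => by
        have := ((hasDerivAt_inv hu.1.ne').const_mul ρ).hasDerivWithinAt (s := Ioo 0 1)
        convert! this using 1
        ring)
      (fun x hx y hy h => by
        have h : ρ / x = ρ / y := h
        have := hx.1; have := hy.1
        field_simp at h
        exact h.symm) f
    rw [himg] at this
    rw [this]
    refine setLIntegral_congr_fun measurableSet_Ioo fun u hu => ?_
    have := hu.1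
    rw [abs_neg, abs_of_pos (by positivity)]

/-! ### Radial functions against the Riesz-type kernel in the normal space -/

/-- The folding of `lintegral_fold` for a kernel of homogeneity `-κ - σ` whose angular average is
`J`. Hypothesis `h2` is the inversion symmetry of `J`, so that both regions are expressed through
the values `φ` of `J` on `(0, 1)`. -/
theorem lintegral_fold_profile {κ σ ρ : ℝ} (hρ : 0 < ρ) (F J : ℝ → ENNReal) (φ : ℝ → ℝ)
    (hF : Measurable F) (hJ : Measurable J) (hφ : ∀ u ∈ Ioo (0 : ℝ) 1, 0 ≤ φ u)
    (h1 : ∀ u ∈ Ioo (0 : ℝ) 1, J u = ENNReal.ofReal (φ u))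
    (h2 : ∀ u ∈ Ioo (0 : ℝ) 1, J (1 / u) = ENNReal.ofReal (u ^ (κ + σ) * φ u)) :
    ∫⁻ r in Ioi (0 : ℝ), F (r / ρ) * (ENNReal.ofReal (r ^ (κ - 1) * ρ ^ (-κ - σ)) * J (r / ρ)) =
      ENNReal.ofReal (ρ ^ (-σ)) * ∫⁻ u in Ioo (0 : ℝ) 1,
        (F u * ENNReal.ofReal (u ^ (κ - 1) * φ u) +
          F (1 / u) * ENNReal.ofReal (u ^ (σ - 1) * φ u)) := by
  rw [lintegral_fold hρ _ (by fun_prop), ← lintegral_const_mul' _ _ ENNReal.ofReal_ne_top]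
  refine setLIntegral_congr_fun measurableSet_Ioo fun u hu => ?_
  have hu0 : 0 < u := hu.1
  have hφu := hφ u hu
  have e1 : ρ * u / ρ = u := by field_simp
  have e2 : ρ / u / ρ = 1 / u := by field_simp
  simp only [e1, e2]
  rw [h1 u hu, h2 u hu, mul_add]
  have r1 : ρ * ((ρ * u) ^ (κ - 1) * ρ ^ (-κ - σ)) = ρ ^ (-σ) * u ^ (κ - 1) := by
    rw [Real.mul_rpow hρ.le hu0.le]
    have : ρ ^ (-σ) = ρ ^ (1 : ℝ) * ρ ^ (κ - 1) * ρ ^ (-κ - σ) := by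
      rw [← Real.rpow_add hρ, ← Real.rpow_add hρ]; ring_nf
    rw [this, Real.rpow_one]; ring
  have r2 : ρ / u ^ 2 * ((ρ / u) ^ (κ - 1) * ρ ^ (-κ - σ)) * u ^ (κ + σ) =
      ρ ^ (-σ) * u ^ (σ - 1) := by
    rw [Real.div_rpow hρ.le hu0.le]
    have t1 : ρ ^ (-σ) = ρ ^ (1 : ℝ) * ρ ^ (κ - 1) * ρ ^ (-κ - σ) := by
      rw [← Real.rpow_add hρ, ← Real.rpow_add hρ]; ring_nf
    have t2 : u ^ (κ + σ) = u ^ (σ - 1) * u ^ (2 : ℝ) * u ^ (κ - 1) := by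
      rw [← Real.rpow_add hu0, ← Real.rpow_add hu0]; ring_nf
    rw [t1, t2, Real.rpow_one, Real.rpow_two]
    have : u ^ (κ - 1) ≠ 0 := by positivity
    field_simp
  congr 1
  · rw [mul_left_comm, ← ENNReal.ofReal_mul (by positivity), ← ENNReal.ofReal_mul (by positivity),
      mul_left_comm (ENNReal.ofReal (ρ ^ (-σ))), ← ENNReal.ofReal_mul (by positivity)]
    congr 2
    linear_combination φ u * r1
  · rw [mul_left_comm, ← ENNReal.ofReal_mul (by positivity), ← ENNReal.ofReal_mul (by positivity),
      mul_left_comm (ENNReal.ofReal (ρ ^ (-σ))), ← ENNReal.ofReal_mul (by positivity)]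
    congr 2
    linear_combination φ u * r2

/-- The case of a point singularity: integrating a radial function in `ℝᵏ` against
`|v₀ - v|^{-k-sp}` averages the kernel over spheres, which produces `Φ`. -/
theorem lintegral_normal {ι : Type*} [Fintype ι] (k : ℕ) (hk : 1 ≤ k) (hcard : Fintype.card ι = k)
    (s p : ℝ) (hσ : 0 < s * p) (v₀ : EuclideanSpace ℝ ι) (hv : 0 < ‖v₀‖) (F : ℝ → ENNReal)
    (hF : Measurable F) :
    ∫⁻ v : EuclideanSpace ℝ ι,
        F (‖v‖ / ‖v₀‖) * ENNReal.ofReal ((‖v₀ - v‖ ^ 2) ^ (-(((k : ℝ) + s * p) / 2))) =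
      ENNReal.ofReal (‖v₀‖ ^ (-(s * p))) * ∫⁻ u in Ioo (0 : ℝ) 1,
        (F u * ENNReal.ofReal (u ^ ((k : ℝ) - 1) * Phi k s p u) +
          F (1 / u) * ENNReal.ofReal (u ^ (s * p - 1) * Phi k s p u)) := by
  set ρ := ‖v₀‖ with hρ
  set q : ℝ := ((k : ℝ) + s * p) / 2 with hq
  set e : EuclideanSpace ℝ ι := ρ⁻¹ • v₀ with he
  have he1 : ‖e‖ = 1 := by
    rw [he, norm_smul, norm_inv, Real.norm_of_nonneg hv.le, ← hρ, inv_mul_cancel₀ hv.ne']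
  obtain ⟨_, _, hΦ⟩ := phi_bound k hk s p hσ
  set G : ℝ → ℝ → ENNReal := fun r c =>
    F (r / ρ) * ENNReal.ofReal ((ρ ^ 2 - 2 * ρ * c + r ^ 2) ^ (-q)) with hG
  have hGm : Measurable (Function.uncurry G) := by
    refine Measurable.mul (hF.comp (by fun_prop)) ?_
    exact ENNReal.measurable_ofReal.comp (by fun_prop)
  have hstart : ∀ v : EuclideanSpace ℝ ι,
      F (‖v‖ / ρ) * ENNReal.ofReal ((‖v₀ - v‖ ^ 2) ^ (-q)) = G ‖v‖ (inner ℝ e v) := by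
    intro v
    simp only [hG]
    rw [norm_sub_sq_real, he, real_inner_smul_left]
    congr 4
    rw [← hρ]; field_simp
  simp_rw [hstart]
  -- homogeneity of the kernel
  have hhom : ∀ r t : ℝ, 0 < r → t ∈ Icc (-1 : ℝ) 1 →
      (ρ ^ 2 - 2 * ρ * (r * t) + r ^ 2) ^ (-q) =
        ρ ^ (-(k : ℝ) - s * p) * (1 - 2 * t * (r / ρ) + (r / ρ) ^ 2) ^ (-q) := by
    intro r t hr ht
    have h1 : ρ ^ 2 - 2 * ρ * (r * t) + r ^ 2 = ρ ^ 2 * (1 - 2 * t * (r / ρ) + (r / ρ) ^ 2) := by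
      field_simp
    have h2 : 0 ≤ 1 - 2 * t * (r / ρ) + (r / ρ) ^ 2 := by
      nlinarith [ht.1, ht.2, sq_nonneg (r / ρ - t)]
    rw [h1, Real.mul_rpow (by positivity) h2, ← Real.rpow_natCast ρ 2, ← Real.rpow_mul hv.le]
    congr 2; push_cast; rw [hq]; ring
  have hinv : ∀ u t : ℝ, u ∈ Ioo (0 : ℝ) 1 → t ∈ Icc (-1 : ℝ) 1 →
      (1 - 2 * t * (1 / u) + (1 / u) ^ 2) ^ (-q) =
        u ^ ((k : ℝ) + s * p) * (1 - 2 * t * u + u ^ 2) ^ (-q) := by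
    intro u t hu ht
    have hu0 := hu.1
    have h1 : 1 - 2 * t * (1 / u) + (1 / u) ^ 2 = (u ^ 2)⁻¹ * (1 - 2 * t * u + u ^ 2) := by
      field_simp; ring
    have h2 : 0 ≤ 1 - 2 * t * u + u ^ 2 := by
      nlinarith [ht.1, ht.2, sq_nonneg (u - t)]
    rw [h1, Real.mul_rpow (by positivity) h2, Real.inv_rpow (by positivity),
      Real.rpow_neg (by positivity), inv_inv, ← Real.rpow_natCast u 2, ← Real.rpow_mul hu0.le]
    congr 2; push_cast; rw [hq]; ring
  obtain hk1 | ⟨n, hn⟩ : k = 1 ∨ ∃ n, k = n + 2 := by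
    rcases Nat.lt_or_ge k 2 with h | h
    · left; omega
    · right; exact ⟨k - 2, by omega⟩
  · rw [lintegral_split_direction (n := 0) (by omega) G hGm e he1]
    have hpt : ∀ a : ℝ, ∫⁻ b : EuclideanSpace ℝ (Fin 0), G (√(a ^ 2 + ‖b‖ ^ 2)) a = G |a| a := by
      intro a
      rw [volume_euclideanSpace_eq_dirac, lintegral_dirac]
      simp [Real.sqrt_sq_eq_abs]
    simp_rw [hpt]
    have hGa : Measurable (fun a : ℝ => G |a| a) :=
      hGm.comp (f := fun a : ℝ => ((|a|, a) : ℝ × ℝ)) (by fun_prop)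
    have hsym : ∫⁻ a : ℝ, G |a| a = ∫⁻ r in Ioi (0 : ℝ), (G r (r * 1) + G r (r * (-1))) := by
      rw [← lintegral_add_compl _ (measurableSet_Ioi (a := (0 : ℝ))), compl_Ioi,
        Measure.restrict_congr_set Iio_ae_eq_Iic.symm]
      have hG1 : Measurable (fun r : ℝ => G r (r * 1)) :=
        hGm.comp (f := fun r : ℝ => ((r, r * 1) : ℝ × ℝ)) (by fun_prop)
      rw [lintegral_add_left hG1]
      congr 1
      · refine setLIntegral_congr_fun measurableSet_Ioi fun r hr => ?_
        have hr : 0 < r := hr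
        simp only [abs_of_pos hr, mul_one]
      · have himg : (fun r : ℝ => -r) '' Ioi 0 = Iio 0 := by simp
        have := lintegral_image_eq_lintegral_abs_deriv_mul (s := Ioi 0) (f := fun r : ℝ => -r)
          (f' := fun _ => -1) measurableSet_Ioi
          (fun u _ => (hasDerivAt_neg u).hasDerivWithinAt)
          (fun x _ y _ h => neg_injective h) (fun a => G |a| a)
        rw [himg] at this
        rw [this]
        refine setLIntegral_congr_fun measurableSet_Ioi fun r hr => ?_
        have hr : 0 < r := hr
        simp [abs_of_pos hr]
    rw [hsym]
    set J : ℝ → ENNReal := fun τ => ENNReal.ofReal ((1 - 2 * 1 * τ + τ ^ 2) ^ (-q)) +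
      ENNReal.ofReal ((1 - 2 * (-1) * τ + τ ^ 2) ^ (-q)) with hJ
    have hJm : Measurable J := by
      rw [hJ]; fun_prop
    have hJ1 : ∀ u ∈ Ioo (0 : ℝ) 1, J u = ENNReal.ofReal (Phi k s p u) := by
      intro u hu
      have hu1 : 0 < 1 - u := by linarith [hu.2]
      have hu2 : 0 < 1 + u := by linarith [hu.1]
      simp only [hJ, Phi, if_pos hk1]
      rw [show 1 - 2 * 1 * u + u ^ 2 = (1 - u) ^ 2 by ring,
        show 1 - 2 * (-1) * u + u ^ 2 = (1 + u) ^ 2 by ring, ← ENNReal.ofReal_add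
          (by positivity) (by positivity), ← Real.rpow_natCast, ← Real.rpow_natCast,
        ← Real.rpow_mul hu1.le, ← Real.rpow_mul hu2.le, hq, hk1]
      push_cast
      rw [show (2 : ℝ) * -((1 + s * p) / 2) = -1 - s * p by ring]
    rw [← lintegral_fold_profile (κ := k) (σ := s * p) hv F J (Phi k s p) hF hJm
      (fun u hu => (hΦ u hu).1) hJ1]
    · refine setLIntegral_congr_fun measurableSet_Ioi fun r hr => ?_
      have hr : 0 < r := hr
      simp only [hG, hJ]
      rw [hhom r 1 hr (by norm_num), hhom r (-1) hr (by norm_num), hk1,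
        ENNReal.ofReal_mul (by positivity), ENNReal.ofReal_mul (by positivity)]
      simp only [Nat.cast_one, sub_self, Real.rpow_zero, one_mul]
      ring
    · intro u hu
      have hu0 := hu.1
      rw [ENNReal.ofReal_mul (by positivity), ← hJ1 u hu]
      simp only [hJ]
      rw [hinv u 1 hu (by norm_num), hinv u (-1) hu (by norm_num),
        ENNReal.ofReal_mul (by positivity), ENNReal.ofReal_mul (by positivity)]
      ring
  · rw [lintegral_axial (n := n) (by omega) G hGm e he1]
    set T : ℝ → ENNReal := fun τ => ∫⁻ t in Ioo (-1 : ℝ) 1,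
      ENNReal.ofReal ((1 - t ^ 2) ^ (((n : ℝ) - 1) / 2) * (1 - 2 * t * τ + τ ^ 2) ^ (-q)) with hT
    set J : ℝ → ENNReal := fun τ => ENNReal.ofReal (sphereVol n) * T τ with hJ
    have hTm : Measurable T := by
      apply Measurable.lintegral_prod_right'
        (f := fun z : ℝ × ℝ => ENNReal.ofReal ((1 - z.2 ^ 2) ^ (((n : ℝ) - 1) / 2) *
          (1 - 2 * z.2 * z.1 + z.1 ^ 2) ^ (-q)))
      exact ENNReal.measurable_ofReal.comp (by fun_prop)
    have hJ1 : ∀ u ∈ Ioo (0 : ℝ) 1, J u = ENNReal.ofReal (Phi k s p u) := by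
      intro u hu
      rw [hn, ofReal_phi n s p u hσ hu]
      simp only [hJ, hT, hq, hn]
      push_cast
      rfl
    have hw : ∀ t ∈ Ioo (-1 : ℝ) 1, 0 ≤ (1 - t ^ 2) ^ (((n : ℝ) - 1) / 2) := by
      intro t ht
      apply Real.rpow_nonneg; nlinarith [ht.1, ht.2]
    rw [← lintegral_fold_profile (κ := k) (σ := s * p) hv F J (Phi k s p) hF
      (hTm.const_mul _) (fun u hu => (hΦ u hu).1) hJ1]
    · rw [← lintegral_const_mul' _ _ ENNReal.ofReal_ne_top]
      refine setLIntegral_congr_fun measurableSet_Ioi fun r hr => ?_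
      have hr : 0 < r := hr
      have hin : ∫⁻ t in Ioo (-1 : ℝ) 1, ENNReal.ofReal ((1 - t ^ 2) ^ (((n : ℝ) - 1) / 2)) *
          G r (r * t) = F (r / ρ) * (ENNReal.ofReal (ρ ^ (-(k : ℝ) - s * p)) * T (r / ρ)) := by
        simp only [hT]
        rw [← lintegral_const_mul' _ _ ENNReal.ofReal_ne_top, ← lintegral_const_mul]
        · refine setLIntegral_congr_fun measurableSet_Ioo fun t ht => ?_
          simp only [hG]
          rw [hhom r t hr (Ioo_subset_Icc_self ht), ENNReal.ofReal_mul (by positivity),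
            ENNReal.ofReal_mul (hw t ht)]
          ring
        · refine Measurable.const_mul (ENNReal.measurable_ofReal.comp (by fun_prop)) _
      simp only [hin, hJ]
      have hpow : r ^ ((k : ℝ) - 1) = r ^ (n + 1) := by
        rw [← Real.rpow_natCast, hn]; congr 1; push_cast; ring
      rw [hpow, ENNReal.ofReal_mul (by positivity)]
      ring
    · intro u hu
      have hu0 := hu.1
      rw [ENNReal.ofReal_mul (by positivity), ← hJ1 u hu]
      have hTi : T (1 / u) = ENNReal.ofReal (u ^ ((k : ℝ) + s * p)) * T u := by
        simp only [hT]
        rw [← lintegral_const_mul' _ _ ENNReal.ofReal_ne_top]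
        refine setLIntegral_congr_fun measurableSet_Ioo fun t ht => ?_
        rw [hinv u t hu (Ioo_subset_Icc_self ht), ← ENNReal.ofReal_mul (by positivity)]
        congr 1; ring
      simp only [hJ]
      rw [hTi]; ring

/-! ### Integrating out the directions along the submanifold -/

theorem pnorm_nonneg (d k : ℕ) (x : EuclideanSpace ℝ (Fin d)) : 0 ≤ pnorm d k x :=
  Real.sqrt_nonneg _

theorem continuous_pnorm (d k : ℕ) : Continuous (pnorm d k) := by
  unfold pnorm
  refine Real.continuous_sqrt.comp (continuous_finsetSum _ fun i _ => ?_)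
  split_ifs
  · fun_prop
  · exact continuous_const

/-- The first `k` coordinates of `x`. -/
def headPart (d k : ℕ) (x : EuclideanSpace ℝ (Fin d)) :
    EuclideanSpace ℝ {i : Fin d // (i : ℕ) < k} :=
  WithLp.toLp 2 fun i => x i

/-- The last `d - k` coordinates of `x`. -/
def tailPart (d k : ℕ) (x : EuclideanSpace ℝ (Fin d)) :
    EuclideanSpace ℝ {i : Fin d // ¬ (i : ℕ) < k} :=
  WithLp.toLp 2 fun i => x i

theorem norm_headPart (d k : ℕ) (x : EuclideanSpace ℝ (Fin d)) :
    ‖headPart d k x‖ = pnorm d k x := by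
  rw [EuclideanSpace.norm_eq, pnorm]
  congr 1
  rw [← Finset.sum_filter, Finset.sum_subtype (p := fun i : Fin d => (i : ℕ) < k)
    (F := inferInstance) _ (by simp)]
  simp [headPart]

theorem norm_sq_split (d k : ℕ) (x : EuclideanSpace ℝ (Fin d)) :
    ‖x‖ ^ 2 = ‖headPart d k x‖ ^ 2 + ‖tailPart d k x‖ ^ 2 := by
  rw [EuclideanSpace.norm_sq_eq, EuclideanSpace.norm_sq_eq, EuclideanSpace.norm_sq_eq,
    ← Fintype.sum_subtype_add_sum_subtype (fun i : Fin d => (i : ℕ) < k)]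
  simp [headPart, tailPart]

theorem measurePreserving_split (d k : ℕ) :
    MeasurePreserving (fun x : EuclideanSpace ℝ (Fin d) => (headPart d k x, tailPart d k x)) := by
  have m1 := PiLp.volume_preserving_ofLp (Fin d)
  have m2 := volume_preserving_piEquivPiSubtypeProd (fun _ : Fin d => ℝ)
    (fun i : Fin d => (i : ℕ) < k)
  have m3 := (PiLp.volume_preserving_toLp {i : Fin d // (i : ℕ) < k}).prod
    (PiLp.volume_preserving_toLp {i : Fin d // ¬ (i : ℕ) < k})
  exact m3.comp (m2.comp m1)

/-- Integration over `ℝ^d` of a function of `|y_k|` against `|x - y|^{-d-sp}`: the directions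
tangential to `K` are integrated out first, the normal ones by `lintegral_normal`. -/
theorem lintegral_full (d k : ℕ) (hk : 1 ≤ k) (hkd : k ≤ d) (s p : ℝ) (hσ : 0 < s * p)
    (x : EuclideanSpace ℝ (Fin d)) (hx : 0 < pnorm d k x) (F : ℝ → ENNReal) (hF : Measurable F) :
    ∫⁻ y : EuclideanSpace ℝ (Fin d),
        F (pnorm d k y / pnorm d k x) * ENNReal.ofReal (‖x - y‖ ^ (-(d : ℝ) - s * p)) =
      ENNReal.ofReal (Real.pi ^ (((d : ℝ) - (k : ℝ)) / 2) * Real.Gamma (((k : ℝ) + s * p) / 2) /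
        Real.Gamma (((d : ℝ) + s * p) / 2) * pnorm d k x ^ (-(s * p))) *
      ∫⁻ u in Ioo (0 : ℝ) 1,
        (F u * ENNReal.ofReal (u ^ ((k : ℝ) - 1) * Phi k s p u) +
          F (1 / u) * ENNReal.ofReal (u ^ (s * p - 1) * Phi k s p u)) := by
  have c1 : Fintype.card {i : Fin d // (i : ℕ) < k} = k := by
    rw [Fintype.card_subtype, Fin.card_filter_val_lt, min_eq_right hkd]
  have c2 : Fintype.card {i : Fin d // ¬ (i : ℕ) < k} = d - k := by
    rw [Fintype.card_subtype_compl, c1, Fintype.card_fin]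
  have c2' : (Fintype.card {i : Fin d // ¬ (i : ℕ) < k} : ℝ) = (d : ℝ) - k := by
    rw [c2, Nat.cast_sub hkd]
  set v₀ := headPart d k x with hv₀
  set w₀ := tailPart d k x with hw₀
  have hρ : pnorm d k x = ‖v₀‖ := (norm_headPart d k x).symm
  rw [hρ] at hx ⊢
  have hk' : (1 : ℝ) ≤ k := by exact_mod_cast hk
  have hkd' : (k : ℝ) ≤ d := by exact_mod_cast hkd
  set q : ℝ := ((d : ℝ) + s * p) / 2 with hq
  set H : EuclideanSpace ℝ {i : Fin d // (i : ℕ) < k} ×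
      EuclideanSpace ℝ {i : Fin d // ¬ (i : ℕ) < k} → ENNReal := fun z =>
    F (‖z.1‖ / ‖v₀‖) * ENNReal.ofReal ((‖v₀ - z.1‖ ^ 2 + ‖w₀ - z.2‖ ^ 2) ^ (-q)) with hH
  have hHm : Measurable H := by
    refine (hF.comp (by fun_prop)).mul (ENNReal.measurable_ofReal.comp (by fun_prop))
  have key := (measurePreserving_split d k).lintegral_comp hHm
  have hL : ∀ y : EuclideanSpace ℝ (Fin d),
      F (pnorm d k y / ‖v₀‖) * ENNReal.ofReal (‖x - y‖ ^ (-(d : ℝ) - s * p)) =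
        H (headPart d k y, tailPart d k y) := by
    intro y
    simp only [hH]
    have e1 : v₀ - headPart d k y = headPart d k (x - y) := rfl
    have e2 : w₀ - tailPart d k y = tailPart d k (x - y) := rfl
    rw [e1, e2, ← norm_sq_split, ← Real.rpow_natCast, ← Real.rpow_mul (norm_nonneg _)]
    have : ((2 : ℕ) : ℝ) * -q = -(d : ℝ) - s * p := by rw [hq]; push_cast; ring
    rw [this, norm_headPart d k y]
  simp_rw [hL]
  rw [key, Measure.volume_eq_prod, lintegral_prod _ hHm.aemeasurable]
  have hne : ∀ᵐ v : EuclideanSpace ℝ {i : Fin d // (i : ℕ) < k}, v ≠ v₀ := by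
    have : Nonempty {i : Fin d // (i : ℕ) < k} := ⟨⟨⟨0, by omega⟩, by simpa using Nat.pos_of_ne_zero (by omega)⟩⟩
    exact (Measure.ae_ne volume v₀)
  set c : ℝ := Real.pi ^ (((d : ℝ) - (k : ℝ)) / 2) * Real.Gamma (((k : ℝ) + s * p) / 2) /
    Real.Gamma q with hc
  have hc0 : 0 ≤ c := by
    have := Real.Gamma_pos_of_pos (show 0 < ((k : ℝ) + s * p) / 2 by positivity)
    have := Real.Gamma_pos_of_pos (show 0 < q by positivity)
    positivity
  have hfib : ∀ᵐ v : EuclideanSpace ℝ {i : Fin d // (i : ℕ) < k},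
      ∫⁻ w, H (v, w) = ENNReal.ofReal c * (F (‖v‖ / ‖v₀‖) *
        ENNReal.ofReal ((‖v₀ - v‖ ^ 2) ^ (-(((k : ℝ) + s * p) / 2)))) := by
    filter_upwards [hne] with v hv
    have ha : 0 < ‖v₀ - v‖ ^ 2 := by
      have : 0 < ‖v₀ - v‖ := norm_pos_iff.2 (sub_ne_zero.2 hv.symm)
      positivity
    simp only [hH]
    have hm : Measurable fun w : EuclideanSpace ℝ {i : Fin d // ¬ (i : ℕ) < k} =>
        ENNReal.ofReal ((‖v₀ - v‖ ^ 2 + ‖w₀ - w‖ ^ 2) ^ (-q)) :=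
      ENNReal.measurable_ofReal.comp (by fun_prop)
    rw [lintegral_const_mul _ hm,
      lintegral_sub_left_eq_self
        (fun w => ENNReal.ofReal ((‖v₀ - v‖ ^ 2 + ‖w‖ ^ 2) ^ (-q))) w₀,
      lintegral_fiber (by rw [c2', hq]; linarith) ha, c2']
    rw [show q - ((d : ℝ) - k) / 2 = ((k : ℝ) + s * p) / 2 by rw [hq]; ring,
      ENNReal.ofReal_mul hc0]
    ring
  rw [lintegral_congr_ae hfib, lintegral_const_mul' _ _ ENNReal.ofReal_ne_top,
    lintegral_normal k hk c1 s p hσ v₀ hx F hF, ← mul_assoc, ← ENNReal.ofReal_mul hc0]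

theorem measurable_Phi (d : ℕ) (s p : ℝ) : Measurable (Phi d s p) := by
  unfold Phi
  split_ifs
  · fun_prop
  · refine Measurable.const_mul ?_ _
    refine StronglyMeasurable.measurable ?_
    refine StronglyMeasurable.integral_prod_right (f := fun r t : ℝ =>
      (1 - t ^ 2) ^ (((d : ℝ) - 3) / 2) * (1 - 2 * t * r + r ^ 2) ^ (-(((d : ℝ) + s * p) / 2))) ?_
    refine Measurable.stronglyMeasurable ?_
    unfold Function.uncurry
    fun_prop

/-- Real-valued version of `lintegral_full`. -/
theorem integral_full (d k : ℕ) (hk : 1 ≤ k) (hkd : k ≤ d) (s p : ℝ) (hσ : 0 < s * p)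
    (x : EuclideanSpace ℝ (Fin d)) (hx : 0 < pnorm d k x) (h : ℝ → ℝ) (hh : Measurable h)
    (hi1 : IntegrableOn (fun u => h u * (u ^ ((k : ℝ) - 1) * Phi k s p u)) (Ioo 0 1))
    (hi2 : IntegrableOn (fun u => h (1 / u) * (u ^ (s * p - 1) * Phi k s p u)) (Ioo 0 1)) :
    ∫ y : EuclideanSpace ℝ (Fin d),
        h (pnorm d k y / pnorm d k x) * ‖x - y‖ ^ (-(d : ℝ) - s * p) =
      (Real.pi ^ (((d : ℝ) - (k : ℝ)) / 2) * Real.Gamma (((k : ℝ) + s * p) / 2) /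
        Real.Gamma (((d : ℝ) + s * p) / 2) * pnorm d k x ^ (-(s * p))) *
      ((∫ u in Ioo (0 : ℝ) 1, h u * (u ^ ((k : ℝ) - 1) * Phi k s p u)) +
       ∫ u in Ioo (0 : ℝ) 1, h (1 / u) * (u ^ (s * p - 1) * Phi k s p u)) := by
  set c : ℝ := Real.pi ^ (((d : ℝ) - (k : ℝ)) / 2) * Real.Gamma (((k : ℝ) + s * p) / 2) /
    Real.Gamma (((d : ℝ) + s * p) / 2) * pnorm d k x ^ (-(s * p)) with hc
  have hc0 : 0 ≤ c := by
    have := Real.Gamma_pos_of_pos (show 0 < ((k : ℝ) + s * p) / 2 by positivity)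
    have := Real.Gamma_pos_of_pos (show 0 < ((d : ℝ) + s * p) / 2 by positivity)
    positivity
  have hp0 := (continuous_pnorm d k).measurable
  obtain ⟨_, _, hΦ⟩ := phi_bound k hk s p hσ
  -- the identity for either sign of `h`, in the extended nonnegative reals
  have key : ∀ g : ℝ → ℝ, Measurable g →
      IntegrableOn (fun u => g u * (u ^ ((k : ℝ) - 1) * Phi k s p u)) (Ioo 0 1) →
      IntegrableOn (fun u => g (1 / u) * (u ^ (s * p - 1) * Phi k s p u)) (Ioo 0 1) →
      ∫⁻ y : EuclideanSpace ℝ (Fin d), ENNReal.ofReal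
        (g (pnorm d k y / pnorm d k x) * ‖x - y‖ ^ (-(d : ℝ) - s * p)) =
      ENNReal.ofReal c *
        ((∫⁻ u in Ioo (0 : ℝ) 1, ENNReal.ofReal (g u * (u ^ ((k : ℝ) - 1) * Phi k s p u))) +
        ∫⁻ u in Ioo (0 : ℝ) 1, ENNReal.ofReal (g (1 / u) * (u ^ (s * p - 1) * Phi k s p u))) := by
    intro g hg hg1 hg2
    have := lintegral_full d k hk hkd s p hσ x hx (fun r => ENNReal.ofReal (g r))
      (ENNReal.measurable_ofReal.comp hg)
    rw [← hc] at this
    have e1 : ∀ y : EuclideanSpace ℝ (Fin d), ENNReal.ofReal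
        (g (pnorm d k y / pnorm d k x) * ‖x - y‖ ^ (-(d : ℝ) - s * p)) =
        ENNReal.ofReal (g (pnorm d k y / pnorm d k x)) *
          ENNReal.ofReal (‖x - y‖ ^ (-(d : ℝ) - s * p)) :=
      fun y => ENNReal.ofReal_mul' (by positivity)
    simp_rw [e1]
    rw [this, ← lintegral_add_left' hg1.1.aemeasurable.ennreal_ofReal]
    congr 1
    refine setLIntegral_congr_fun measurableSet_Ioo fun u hu => ?_
    have hu0 := hu.1
    have := (hΦ u hu).1
    rw [ENNReal.ofReal_mul' (p := g u) (by positivity),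
      ENNReal.ofReal_mul' (p := g (1 / u)) (by positivity)]
  have kp := key h hh hi1 hi2
  have hn1 : IntegrableOn (fun u => -(h u * (u ^ ((k : ℝ) - 1) * Phi k s p u))) (Ioo 0 1) :=
    Integrable.neg hi1
  have hn2 : IntegrableOn (fun u => -(h (1 / u) * (u ^ (s * p - 1) * Phi k s p u))) (Ioo 0 1) :=
    Integrable.neg hi2
  have kn := key (fun r => - h r) hh.neg (by simpa only [neg_mul] using hn1)
    (by simpa only [neg_mul] using hn2)
  have hfm : AEStronglyMeasurable (fun y : EuclideanSpace ℝ (Fin d) =>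
      h (pnorm d k y / pnorm d k x) * ‖x - y‖ ^ (-(d : ℝ) - s * p)) volume := by
    refine Measurable.aestronglyMeasurable ?_
    exact (hh.comp (by fun_prop)).mul (by fun_prop)
  simp only [neg_mul] at kn
  have f1 := Integrable.lintegral_lt_top hi1
  have f2 := Integrable.lintegral_lt_top hi2
  have f3 := Integrable.lintegral_lt_top hn1
  have f4 := Integrable.lintegral_lt_top hn2
  have hint : Integrable (fun y : EuclideanSpace ℝ (Fin d) =>
      h (pnorm d k y / pnorm d k x) * ‖x - y‖ ^ (-(d : ℝ) - s * p)) := by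
    refine ⟨hfm, ?_⟩
    have habs : ∀ r : ℝ, ‖r‖ₑ ≤ ENNReal.ofReal r + ENNReal.ofReal (-r) := by
      intro r
      rw [← ofReal_norm, Real.norm_eq_abs]
      rcases le_total 0 r with hr | hr
      · rw [abs_of_nonneg hr]; exact le_self_add
      · rw [abs_of_nonpos hr]; exact le_add_self
    refine lt_of_le_of_lt (lintegral_mono fun y => habs _) ?_
    rw [lintegral_add_left' hfm.aemeasurable.ennreal_ofReal, kp, kn]
    exact ENNReal.add_lt_top.2 ⟨ENNReal.mul_lt_top ENNReal.ofReal_lt_top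
      (ENNReal.add_lt_top.2 ⟨f1, f2⟩), ENNReal.mul_lt_top ENNReal.ofReal_lt_top
      (ENNReal.add_lt_top.2 ⟨f3, f4⟩)⟩
  rw [integral_eq_lintegral_pos_part_sub_lintegral_neg_part hint,
    integral_eq_lintegral_pos_part_sub_lintegral_neg_part hi1,
    integral_eq_lintegral_pos_part_sub_lintegral_neg_part hi2, kp, kn]
  simp only [ENNReal.toReal_mul, ENNReal.toReal_ofReal hc0,
    ENNReal.toReal_add f1.ne f2.ne, ENNReal.toReal_add f3.ne f4.ne]
  ring

/-! ### One-dimensional principal values -/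

/-- A consequence of Bernoulli's inequality, valid for exponents of either sign: `1 - u^γ` vanishes
to first order at `u = 1`. -/
theorem abs_one_sub_rpow_le (γ u : ℝ) (hu : u ∈ Ioo (0 : ℝ) 1) :
    |1 - u ^ γ| ≤ max 1 |γ| * (1 - u) * max 1 (u ^ γ) := by
  have hu0 := hu.1
  have hu1 : 0 < 1 - u := by linarith [hu.2]
  have base : ∀ g : ℝ, 0 ≤ g → 1 - u ^ g ≤ max 1 |g| * (1 - u) := by
    intro g hg
    rcases le_total g 1 with h | h
    · have h1 : u ^ (1 : ℝ) ≤ u ^ g := Real.rpow_le_rpow_of_exponent_ge hu0 hu.2.le h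
      rw [Real.rpow_one] at h1
      calc 1 - u ^ g ≤ 1 * (1 - u) := by linarith
        _ ≤ _ := by gcongr; exact le_max_left _ _
    · have h1 := one_add_mul_self_le_rpow_one_add (show (-1 : ℝ) ≤ u - 1 by linarith) h
      rw [add_sub_cancel] at h1
      calc 1 - u ^ g ≤ |g| * (1 - u) := by rw [abs_of_nonneg hg]; linarith
        _ ≤ _ := by gcongr; exact le_max_right _ _
  have hm : (1 : ℝ) ≤ max 1 |γ| := le_max_left _ _
  rcases le_total 0 γ with h | h
  · have h1 : u ^ γ ≤ 1 := Real.rpow_le_one hu0.le hu.2.le h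
    rw [abs_of_nonneg (by linarith), max_eq_left h1, mul_one]
    exact base γ h
  · have h1 : 1 ≤ u ^ γ := Real.one_le_rpow_of_pos_of_le_one_of_nonpos hu0 hu.2.le h
    have h2 := base (-γ) (by linarith)
    rw [abs_neg] at h2
    rw [abs_of_nonpos (by linarith), max_eq_right h1]
    have h3 : u ^ γ * u ^ (-γ) = 1 := by rw [← Real.rpow_add hu0]; simp
    calc -(1 - u ^ γ) = (1 - u ^ (-γ)) * u ^ γ := by linear_combination h3
      _ ≤ _ := by gcongr

/-- The bound holds although `p - 2` may be negative: at `t = 0` the factor `t` annihilates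
the junk value of `0 ^ (p - 2)`. -/
theorem abs_signed_rpow_le {t R p : ℝ} (hp : 1 ≤ p) (hR : |t| ≤ R) :
    |t * |t| ^ (p - 2)| ≤ R ^ (p - 1) := by
  rcases eq_or_ne t 0 with rfl | ht
  · simp only [zero_mul, abs_zero]
    exact Real.rpow_nonneg ((abs_nonneg _).trans hR) _
  · have h0 : 0 < |t| := abs_pos.2 ht
    rw [abs_mul, abs_of_nonneg (a := |t| ^ (p - 2)) (by positivity)]
    calc |t| * |t| ^ (p - 2) = |t| ^ (p - 1) := by
          nth_rewrite 1 [← Real.rpow_one |t|]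
          rw [← Real.rpow_add h0]; ring_nf
      _ ≤ _ := Real.rpow_le_rpow h0.le hR (by linarith)

theorem mul_signed_rpow {t p : ℝ} (hp : 1 ≤ p) : t * (t * |t| ^ (p - 2)) = |t| ^ p := by
  rcases eq_or_ne t 0 with rfl | ht
  · rw [zero_mul, abs_zero, Real.zero_rpow (by linarith)]
  · have h0 : 0 < |t| := abs_pos.2 ht
    rw [← mul_assoc, ← abs_mul_abs_self, ← sq, ← Real.rpow_two, ← Real.rpow_add h0]
    ring_nf

theorem integrableOn_beta {a b : ℝ} (ha : 0 < a) (hb : 0 < b) :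
    IntegrableOn (fun u : ℝ => u ^ (a - 1) * (1 - u) ^ (b - 1)) (Ioo 0 1) := by
  have h := Complex.betaIntegral_convergent (u := a) (v := b) (by simpa) (by simpa)
  rw [intervalIntegrable_iff_integrableOn_Ioo_of_le zero_le_one] at h
  refine (Integrable.norm h).congr ?_
  filter_upwards [ae_restrict_mem measurableSet_Ioo] with u hu
  have h1 : 0 < 1 - u := by linarith [hu.2]
  have e1 : (1 - (u : ℂ)) = ((1 - u : ℝ) : ℂ) := by push_cast; rfl
  rw [norm_mul, e1, Complex.norm_cpow_eq_rpow_re_of_pos hu.1,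
    Complex.norm_cpow_eq_rpow_re_of_pos h1]
  simp

/-- The principal value mechanism: `m` and `n` blow up at `1` but cancel there. Truncating them
at the slightly different places `1 - u > δ` and `1 / u - 1 > δ` produces an error supported on a
set of measure `O(δ²)`, which vanishes in the limit because `m = O((1 - u)^{b - 2})`
with `b > 0`. -/
theorem tendsto_truncated {b B : ℝ} (hb : 0 < b) (m n D : ℝ → ℝ)
    (hm : Measurable m) (hn : Measurable n) (hD : IntegrableOn D (Ioo 0 1))
    (hmD : ∀ u ∈ Ioo (0 : ℝ) 1, |m u| ≤ D u / (1 - u))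
    (hnD : ∀ u ∈ Ioo (0 : ℝ) 1, |n u| ≤ D u / (1 - u))
    (hmn : ∀ u ∈ Ioo (0 : ℝ) 1, |m u + n u| ≤ D u)
    (hB : ∀ u ∈ Ico (1 / 2 : ℝ) 1, D u ≤ B * (1 - u) ^ (b - 1)) :
    (∀ δ : ℝ, 0 < δ → IntegrableOn ({u | δ < 1 - u}.indicator n) (Ioo 0 1)) ∧
    (∀ δ : ℝ, 0 < δ → IntegrableOn ({u | δ < 1 / u - 1}.indicator m) (Ioo 0 1)) ∧
    Tendsto (fun δ : ℝ => (∫ u in Ioo (0 : ℝ) 1, {u | δ < 1 - u}.indicator n u) +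
      ∫ u in Ioo (0 : ℝ) 1, {u | δ < 1 / u - 1}.indicator m u) (𝓝[>] 0)
      (𝓝 (∫ u in Ioo (0 : ℝ) 1, (m u + n u))) := by
  have hS1 : ∀ δ : ℝ, MeasurableSet {u : ℝ | δ < 1 - u} := fun δ =>
    measurableSet_lt measurable_const (by fun_prop)
  have hS2 : ∀ δ : ℝ, MeasurableSet {u : ℝ | δ < 1 / u - 1} := fun δ =>
    measurableSet_lt measurable_const (by fun_prop)
  have hD0 : ∀ u ∈ Ioo (0 : ℝ) 1, 0 ≤ D u := fun u hu => (abs_nonneg _).trans (hmn u hu)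
  have hint : ∀ (f : ℝ → ℝ) (S : Set ℝ) (η : ℝ), Measurable f → MeasurableSet S → 0 < η →
      (∀ u ∈ Ioo (0 : ℝ) 1, |f u| ≤ D u / (1 - u)) → (∀ u ∈ Ioo (0 : ℝ) 1, u ∈ S → η ≤ 1 - u) →
      IntegrableOn (S.indicator f) (Ioo 0 1) := by
    intro f S η hf hS hη hfD hSη
    refine Integrable.mono' (hD.mul_const η⁻¹) (hf.indicator hS).aestronglyMeasurable ?_
    filter_upwards [ae_restrict_mem measurableSet_Ioo] with u hu
    by_cases h : u ∈ S
    · rw [indicator_of_mem h, Real.norm_eq_abs]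
      refine (hfD u hu).trans ?_
      rw [div_eq_mul_inv]
      have := hD0 u hu
      have := hSη u hu h
      gcongr
    · rw [indicator_of_notMem h, norm_zero]
      have := hD0 u hu
      positivity
  have hi1 : ∀ δ : ℝ, 0 < δ → IntegrableOn ({u | δ < 1 - u}.indicator n) (Ioo 0 1) :=
    fun δ hδ => hint n _ δ hn (hS1 δ) hδ hnD fun u _ h => le_of_lt h
  have hi1' : ∀ δ : ℝ, 0 < δ → IntegrableOn ({u | δ < 1 - u}.indicator m) (Ioo 0 1) :=
    fun δ hδ => hint m _ δ hm (hS1 δ) hδ hmD fun u _ h => le_of_lt h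
  have hlow : ∀ δ u : ℝ, 0 < δ → u ∈ Ioo (0 : ℝ) 1 → δ < 1 / u - 1 → δ / (1 + δ) ≤ 1 - u := by
    intro δ u hδ hu h
    have hu0 := hu.1
    have h1 : (1 + δ) * u < 1 := by
      have : 1 + δ < 1 / u := by linarith
      rwa [lt_div_iff₀ hu0] at this
    rw [div_le_iff₀ (by linarith)]
    nlinarith
  have hi2 : ∀ δ : ℝ, 0 < δ → IntegrableOn ({u | δ < 1 / u - 1}.indicator m) (Ioo 0 1) :=
    fun δ hδ => hint m _ (δ / (1 + δ)) hm (hS2 δ) (by positivity) hmD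
      fun u hu h => hlow δ u hδ hu h
  refine ⟨hi1, hi2, ?_⟩
  -- the cancelling part
  have t1 : Tendsto (fun δ : ℝ => ∫ u in Ioo (0 : ℝ) 1,
      {u | δ < 1 - u}.indicator (fun u => m u + n u) u) (𝓝[>] 0)
      (𝓝 (∫ u in Ioo (0 : ℝ) 1, (m u + n u))) := by
    refine tendsto_integral_filter_of_dominated_convergence D ?_ ?_ hD ?_
    · exact Eventually.of_forall fun δ =>
        ((hm.add hn).indicator (hS1 δ)).aestronglyMeasurable
    · refine Eventually.of_forall fun δ => ?_
      filter_upwards [ae_restrict_mem measurableSet_Ioo] with u hu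
      exact (norm_indicator_le_norm_self _ _).trans (hmn u hu)
    · filter_upwards [ae_restrict_mem measurableSet_Ioo] with u hu
      refine tendsto_const_nhds.congr' ?_
      have : ∀ᶠ δ : ℝ in 𝓝[>] 0, δ < 1 - u :=
        nhdsWithin_le_nhds (Iio_mem_nhds (by linarith [hu.2]))
      filter_upwards [this] with δ hδ
      rw [indicator_of_mem (show u ∈ {u | δ < 1 - u} from hδ)]
  -- the boundary layer
  have hB0 : 0 ≤ B := by
    have h1 := hB (1 / 2) (by norm_num)
    have h2 := hD0 (1 / 2) (by norm_num)
    have h3 : (0 : ℝ) < (1 - 1 / 2) ^ (b - 1) := by positivity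
    by_contra h
    nlinarith [mul_pos_of_neg_of_neg (not_le.1 h) (neg_lt_zero.2 h3)]
  set E : ℝ := B * 2 ^ |b - 2| with hE
  have t2 : Tendsto (fun δ : ℝ => ∫ u in Ico (1 - δ) (1 / (1 + δ)), m u) (𝓝[>] 0) (𝓝 0) := by
    have t3 : Tendsto (fun δ : ℝ => E * δ ^ b) (𝓝[>] 0) (𝓝 0) := by
      have : Tendsto (fun δ : ℝ => E * δ ^ b) (𝓝 0) (𝓝 (E * 0 ^ b)) :=
        ((Real.continuous_rpow_const hb.le).tendsto 0).const_mul E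
      rw [Real.zero_rpow hb.ne', mul_zero] at this
      exact this.mono_left nhdsWithin_le_nhds
    refine squeeze_zero_norm' ?_ t3
    have hsmall : ∀ᶠ δ : ℝ in 𝓝[>] 0, δ < 1 / 2 :=
      nhdsWithin_le_nhds (Iio_mem_nhds (by norm_num))
    filter_upwards [hsmall, self_mem_nhdsWithin] with δ hδ hδ0
    have hδ0 : 0 < δ := hδ0
    have hpt : ∀ u ∈ Ico (1 - δ) (1 / (1 + δ)), ‖m u‖ ≤ E * δ ^ (b - 2) := by
      rintro u ⟨h1, h2⟩
      have hu0 : 0 < u := by linarith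
      have h3 : u * (1 + δ) < 1 := by rwa [lt_div_iff₀ (by linarith)] at h2
      have hu1 : 0 < 1 - u := by nlinarith
      have hlo : δ / 2 ≤ 1 - u := by nlinarith
      set t := (1 - u) / δ with ht
      have ht0 : 0 < t := by positivity
      have ht1 : t ≤ 1 := by rw [ht, div_le_one hδ0]; linarith
      have ht2 : 1 / 2 ≤ t := by rw [ht, le_div_iff₀ hδ0]; linarith
      have hu : 1 - u = t * δ := by rw [ht]; field_simp
      have htb : t ^ (b - 2) ≤ 2 ^ |b - 2| := by
        calc t ^ (b - 2) ≤ t ^ (-|b - 2|) :=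
              Real.rpow_le_rpow_of_exponent_ge ht0 ht1 (neg_abs_le _)
          _ ≤ (1 / 2) ^ (-|b - 2|) :=
              Real.rpow_le_rpow_of_nonpos (by norm_num) ht2 (by simp)
          _ = 2 ^ |b - 2| := by
              rw [Real.rpow_neg (by norm_num), one_div, Real.inv_rpow (by norm_num), inv_inv]
      calc ‖m u‖ ≤ D u / (1 - u) := hmD u ⟨hu0, by linarith⟩
        _ ≤ B * (1 - u) ^ (b - 1) / (1 - u) := by
            gcongr; exact hB u ⟨by linarith, by linarith⟩
        _ = B * (1 - u) ^ (b - 2) := by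
            rw [mul_div_assoc, ← Real.rpow_sub_one hu1.ne']; ring_nf
        _ = B * (t ^ (b - 2) * δ ^ (b - 2)) := by rw [hu, Real.mul_rpow ht0.le hδ0.le]
        _ ≤ B * (2 ^ |b - 2| * δ ^ (b - 2)) := by gcongr
        _ = E * δ ^ (b - 2) := by rw [hE]; ring
    have hle : 1 - δ ≤ 1 / (1 + δ) := by
      rw [le_div_iff₀ (by linarith)]; nlinarith
    have hvol : volume.real (Ico (1 - δ) (1 / (1 + δ))) ≤ δ ^ 2 := by
      rw [Real.volume_real_Ico_of_le hle]
      have : 1 / (1 + δ) - (1 - δ) = δ ^ 2 / (1 + δ) := by field_simp; ring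
      rw [this]
      exact div_le_self (by positivity) (by linarith)
    calc _ ≤ E * δ ^ (b - 2) * volume.real (Ico (1 - δ) (1 / (1 + δ))) :=
          norm_setIntegral_le_of_norm_le_const (by simp) hpt
      _ ≤ E * δ ^ (b - 2) * δ ^ 2 := by gcongr
      _ = E * δ ^ b := by
          rw [mul_assoc, ← Real.rpow_two, ← Real.rpow_add hδ0]; ring_nf
  have t := t1.add t2
  rw [add_zero] at t
  refine t.congr' ?_
  have hsmall : ∀ᶠ δ : ℝ in 𝓝[>] 0, δ < 1 / 2 :=
    nhdsWithin_le_nhds (Iio_mem_nhds (by norm_num))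
  filter_upwards [hsmall, self_mem_nhdsWithin] with δ hδ hδ0
  have hδ0 : 0 < δ := hδ0
  have e1 : ∫ u in Ioo (0 : ℝ) 1, {u | δ < 1 - u}.indicator (fun u => m u + n u) u =
      (∫ u in Ioo (0 : ℝ) 1, {u | δ < 1 - u}.indicator m u) +
        ∫ u in Ioo (0 : ℝ) 1, {u | δ < 1 - u}.indicator n u := by
    rw [← integral_add (hi1' δ hδ0) (hi1 δ hδ0)]
    refine integral_congr_ae (Eventually.of_forall fun u => ?_)
    exact congrFun (indicator_add _ m n) u
  have e2 : ∫ u in Ico (1 - δ) (1 / (1 + δ)), m u =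
      (∫ u in Ioo (0 : ℝ) 1, {u | δ < 1 / u - 1}.indicator m u) -
        ∫ u in Ioo (0 : ℝ) 1, {u | δ < 1 - u}.indicator m u := by
    rw [← integral_sub (hi2 δ hδ0) (hi1' δ hδ0), ← integral_indicator measurableSet_Ico,
      ← integral_indicator measurableSet_Ioo]
    refine integral_congr_ae (Eventually.of_forall fun u => ?_)
    have hlt : 1 / (1 + δ) < 1 := by rw [div_lt_one (by linarith)]; linarith
    by_cases hu : u ∈ Ioo (0 : ℝ) 1
    · have hu0 := hu.1
      have h2 : δ < 1 / u - 1 ↔ u < 1 / (1 + δ) := by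
        rw [lt_sub_iff_add_lt, lt_div_iff₀ hu0, lt_div_iff₀ (by linarith)]
        constructor <;> intro h <;> linarith
      have h3 : δ < 1 - u → δ < 1 / u - 1 := by
        intro h
        rw [h2, lt_div_iff₀ (by linarith)]; nlinarith
      simp only [indicator_of_mem hu]
      by_cases hA : δ < 1 - u
      · have hB := h3 hA
        have : u ∉ Ico (1 - δ) (1 / (1 + δ)) := fun h => by linarith [h.1]
        rw [indicator_of_notMem this, indicator_of_mem (show u ∈ {u | δ < 1 / u - 1} from hB),
          indicator_of_mem (show u ∈ {u | δ < 1 - u} from hA), sub_self]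
      · rw [indicator_of_notMem (show u ∉ {u | δ < 1 - u} from hA), sub_zero]
        by_cases hB : δ < 1 / u - 1
        · rw [indicator_of_mem (show u ∈ {u | δ < 1 / u - 1} from hB),
            indicator_of_mem (show u ∈ Ico (1 - δ) (1 / (1 + δ)) from
              ⟨by linarith [not_lt.1 hA], h2.1 hB⟩)]
        · rw [indicator_of_notMem (show u ∉ {u | δ < 1 / u - 1} from hB),
            indicator_of_notMem]
          exact fun h => hB (h2.2 h.2)
    · rw [indicator_of_notMem hu, indicator_of_notMem]
      exact fun h => hu ⟨by linarith [h.1], by linarith [h.2]⟩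
  rw [e1, e2]; ring

/-! ### The radial limit -/

/-- The integrand on `(0, 1)` coming from the region `|y_k| > |x_k|` after inversion. -/
def outerPart (k : ℕ) (s p α β γ u : ℝ) : ℝ :=
  u ^ (s * p - 1) * (u ^ (-α) + u ^ (-β)) * ((1 - u ^ γ) * |1 - u ^ γ| ^ (p - 2)) * Phi k s p u

/-- The integrand on `(0, 1)` coming from the region `|y_k| < |x_k|`. -/
def innerPart (k : ℕ) (s p α β γ u : ℝ) : ℝ := -(u ^ γ * outerPart k s p α β γ u)

/-- The ground state nonlinearity in the scale-invariant variable `r = |y_k| / |x_k|`, truncated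
to `|1 - r| > δ`. -/
def profile (p α β γ δ : ℝ) : ℝ → ℝ :=
  {r : ℝ | δ < |1 - r|}.indicator fun r =>
    ((1 - r ^ (-γ)) * |1 - r ^ (-γ)| ^ (p - 2)) * (r ^ α + r ^ β)

theorem measurable_outerPart (k : ℕ) (s p α β γ : ℝ) : Measurable (outerPart k s p α β γ) := by
  unfold outerPart
  have := measurable_Phi k s p
  fun_prop

theorem measurable_profile (p α β γ δ : ℝ) : Measurable (profile p α β γ δ) := by
  unfold profile
  refine Measurable.indicator (by fun_prop) (measurableSet_lt measurable_const (by fun_prop))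

/-- The region `|y_k| > |x_k|`, brought back to `(0, 1)` by `r = 1 / u`. -/
theorem profile_outer (k : ℕ) (s p α β γ δ u : ℝ) (hu : u ∈ Ioo (0 : ℝ) 1) :
    profile p α β γ δ (1 / u) * (u ^ (s * p - 1) * Phi k s p u) =
      {u | δ < 1 / u - 1}.indicator (outerPart k s p α β γ) u := by
  have hu0 := hu.1
  have h1 : 1 < 1 / u := by rw [lt_div_iff₀ hu0]; linarith [hu.2]
  have e : ∀ a : ℝ, (1 / u) ^ a = u ^ (-a) := fun a => by
    rw [one_div, Real.inv_rpow hu0.le, Real.rpow_neg hu0.le]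
  have habs : |1 - 1 / u| = 1 / u - 1 := by rw [abs_of_neg (by linarith)]; ring
  unfold profile
  by_cases h : δ < 1 / u - 1
  · rw [indicator_of_mem (show 1 / u ∈ {r : ℝ | δ < |1 - r|} by simpa only [mem_ofPred_eq, habs]),
      indicator_of_mem (show u ∈ {u | δ < 1 / u - 1} from h)]
    simp only [e, neg_neg, outerPart]
    ring
  · rw [indicator_of_notMem (show 1 / u ∉ {r : ℝ | δ < |1 - r|} by
      simpa only [mem_ofPred_eq, habs]), indicator_of_notMem (show u ∉ {u | δ < 1 / u - 1} from h),
      zero_mul]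

/-- The region `|y_k| < |x_k|`. The relation `γ p = k + α + β - sp` makes this integrand a multiple
of the outer one. -/
theorem profile_inner (k : ℕ) (s p α β γ δ u : ℝ) (hp : 1 ≤ p)
    (hγ : γ = ((k : ℝ) + α + β - s * p) / p) (hu : u ∈ Ioo (0 : ℝ) 1) :
    profile p α β γ δ u * (u ^ ((k : ℝ) - 1) * Phi k s p u) =
      {u | δ < 1 - u}.indicator (innerPart k s p α β γ) u := by
  have hu0 := hu.1
  have habs : |1 - u| = 1 - u := abs_of_pos (by linarith [hu.2])
  unfold profile
  by_cases h : δ < 1 - u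
  · rw [indicator_of_mem (show u ∈ {r : ℝ | δ < |1 - r|} by simpa only [mem_ofPred_eq, habs]),
      indicator_of_mem (show u ∈ {u | δ < 1 - u} from h)]
    have hγp : γ * p = (k : ℝ) + α + β - s * p := by rw [hγ]; field_simp
    have e1 : 1 - u ^ (-γ) = -(u ^ (-γ) * (1 - u ^ γ)) := by
      have : u ^ (-γ) * u ^ γ = 1 := by rw [← Real.rpow_add hu0]; simp
      linear_combination -this
    have e2 : |1 - u ^ (-γ)| ^ (p - 2) = u ^ (-γ * (p - 2)) * |1 - u ^ γ| ^ (p - 2) := by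
      rw [e1, abs_neg, abs_mul, abs_of_pos (by positivity : 0 < u ^ (-γ)),
        Real.mul_rpow (by positivity) (abs_nonneg _), ← Real.rpow_mul hu0.le]
    have e4 : u ^ (-γ) * u ^ (-γ * (p - 2)) * u ^ α * u ^ ((k : ℝ) - 1) =
        u ^ γ * u ^ (s * p - 1) * u ^ (-β) := by
      simp only [← Real.rpow_add hu0]
      congr 1; linear_combination -hγp
    have e5 : u ^ (-γ) * u ^ (-γ * (p - 2)) * u ^ β * u ^ ((k : ℝ) - 1) =
        u ^ γ * u ^ (s * p - 1) * u ^ (-α) := by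
      simp only [← Real.rpow_add hu0]
      congr 1; linear_combination -hγp
    rw [e2, e1]
    simp only [innerPart, outerPart]
    linear_combination (-(1 - u ^ γ) * |1 - u ^ γ| ^ (p - 2) * Phi k s p u) * (e4 + e5)
  · rw [indicator_of_notMem (show u ∉ {r : ℝ | δ < |1 - r|} by
      simpa only [mem_ofPred_eq, habs]), indicator_of_notMem (show u ∉ {u | δ < 1 - u} from h),
      zero_mul]

/-- The two contributions add up to the integrand of `𝒞₁`. -/
theorem outer_add_inner (k : ℕ) (s p α β γ u : ℝ) (hp : 1 ≤ p) :
    outerPart k s p α β γ u + innerPart k s p α β γ u =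
      u ^ (s * p - 1) * (u ^ (-α) + u ^ (-β)) * |1 - u ^ γ| ^ p * Phi k s p u := by
  have := mul_signed_rpow (t := 1 - u ^ γ) hp
  simp only [innerPart, outerPart]
  rw [← this]; ring

/-- The radial principal value: the truncated one-dimensional integrals are finite and converge
to `𝒞₁`. -/
theorem radial_limit (k : ℕ) (s p α β γ : ℝ) (hp : 1 ≤ p) (hs : s ∈ Ioo (0 : ℝ) 1) (hk : 1 ≤ k)
    (hα : α ∈ Ioo (-(k : ℝ)) (s * p)) (hβ : β ∈ Ioo (-(k : ℝ)) (s * p))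
    (hγ : γ = ((k : ℝ) + α + β - s * p) / p) :
    (∀ δ : ℝ, 0 < δ → IntegrableOn
      (fun u => profile p α β γ δ u * (u ^ ((k : ℝ) - 1) * Phi k s p u)) (Ioo 0 1)) ∧
    (∀ δ : ℝ, 0 < δ → IntegrableOn
      (fun u => profile p α β γ δ (1 / u) * (u ^ (s * p - 1) * Phi k s p u)) (Ioo 0 1)) ∧
    Tendsto (fun δ : ℝ =>
      (∫ u in Ioo (0 : ℝ) 1, profile p α β γ δ u * (u ^ ((k : ℝ) - 1) * Phi k s p u)) +
      ∫ u in Ioo (0 : ℝ) 1, profile p α β γ δ (1 / u) * (u ^ (s * p - 1) * Phi k s p u))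
      (𝓝[>] 0) (𝓝 (C1 k s p α β)) := by
  have hp0 : 0 < p := by linarith
  have hσ : 0 < s * p := mul_pos hs.1 hp0
  have hb : 0 < p - s * p := by nlinarith [hs.2]
  obtain ⟨C, hC0, hΦ⟩ := phi_bound k hk s p hσ
  have hγp : γ * p = (k : ℝ) + α + β - s * p := by rw [hγ]; field_simp
  set M : ℝ := max 1 |γ| with hM
  have hM1 : 1 ≤ M := le_max_left _ _
  set L : ℝ := M ^ p * C with hL
  have hL0 : 0 ≤ L := by positivity
  set Z : ℝ → ℝ := fun u => u ^ ((s * p - α) - 1) + u ^ ((s * p - β) - 1) +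
    u ^ (((k : ℝ) + β) - 1) + u ^ (((k : ℝ) + α) - 1) with hZ
  set D : ℝ → ℝ := fun u => L * (Z u * (1 - u) ^ ((p - s * p) - 1)) with hDdef
  have hD : IntegrableOn D (Ioo 0 1) := by
    have i1 := integrableOn_beta (sub_pos.2 hα.2) hb
    have i2 := integrableOn_beta (sub_pos.2 hβ.2) hb
    have i3 := integrableOn_beta (show 0 < (k : ℝ) + β by linarith [hβ.1]) hb
    have i4 := integrableOn_beta (show 0 < (k : ℝ) + α by linarith [hα.1]) hb
    have := (((Integrable.add i1 i2).add i3).add i4).const_mul L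
    refine this.congr (Eventually.of_forall fun u => ?_)
    simp only [hDdef, hZ, Pi.add_apply]; ring
  -- `max 1 (u ^ γ) ^ p ≤ 1 + u ^ (γ p)` turns the weight into four Beta densities
  have hW : ∀ u ∈ Ioo (0 : ℝ) 1,
      u ^ (s * p - 1) * (u ^ (-α) + u ^ (-β)) * max 1 (u ^ γ) ^ p ≤ Z u := by
    intro u hu
    have hu0 := hu.1
    have h1 : max 1 (u ^ γ) ^ p ≤ 1 + u ^ (γ * p) := by
      rw [Real.rpow_mul hu0.le]
      have := Real.rpow_nonneg (Real.rpow_nonneg hu0.le γ) p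
      rcases le_total 1 (u ^ γ) with h | h
      · rw [max_eq_right h]; linarith
      · rw [max_eq_left h, Real.one_rpow]; linarith
    calc _ ≤ u ^ (s * p - 1) * (u ^ (-α) + u ^ (-β)) * (1 + u ^ (γ * p)) := by gcongr
      _ = Z u := by
        simp only [hZ, mul_add, add_mul, mul_one, hγp, ← Real.rpow_add hu0]
        ring_nf
  have hmain : ∀ u ∈ Ioo (0 : ℝ) 1, ∀ (A e : ℝ), |A| ≤ M ^ p * (1 - u) ^ e * max 1 (u ^ γ) ^ p →
      |u ^ (s * p - 1) * (u ^ (-α) + u ^ (-β)) * A * Phi k s p u| ≤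
        L * (Z u * (1 - u) ^ (e - 1 - s * p)) := by
    intro u hu A e hA
    have hu0 := hu.1
    have hu1 : 0 < 1 - u := by linarith [hu.2]
    obtain ⟨q0, q1⟩ := hΦ u hu
    have hw : 0 ≤ u ^ (s * p - 1) * (u ^ (-α) + u ^ (-β)) := by positivity
    rw [abs_mul, abs_mul, abs_of_nonneg q0, abs_of_nonneg hw]
    calc _ ≤ u ^ (s * p - 1) * (u ^ (-α) + u ^ (-β)) *
          (M ^ p * (1 - u) ^ e * max 1 (u ^ γ) ^ p) * (C * (1 - u) ^ (-1 - s * p)) := by gcongr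
      _ = M ^ p * C * ((u ^ (s * p - 1) * (u ^ (-α) + u ^ (-β)) * max 1 (u ^ γ) ^ p) *
          ((1 - u) ^ e * (1 - u) ^ (-1 - s * p))) := by ring
      _ ≤ M ^ p * C * (Z u * ((1 - u) ^ e * (1 - u) ^ (-1 - s * p))) := by
          have := hW u hu
          gcongr
      _ = _ := by rw [← Real.rpow_add hu1, hL]; ring_nf
  have hA : ∀ u ∈ Ioo (0 : ℝ) 1, |(1 - u ^ γ) * |1 - u ^ γ| ^ (p - 2)| * max 1 (u ^ γ) ≤
      M ^ p * (1 - u) ^ (p - 1) * max 1 (u ^ γ) ^ p := by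
    intro u hu
    have hu1 : 0 < 1 - u := by linarith [hu.2]
    set X := max 1 (u ^ γ) with hX
    have hX1 : 1 ≤ X := le_max_left _ _
    have hX0 : 0 < X := by linarith
    have h1 := abs_signed_rpow_le hp (abs_one_sub_rpow_le γ u hu)
    calc _ ≤ (M * (1 - u) * X) ^ (p - 1) * X := by gcongr
      _ = M ^ (p - 1) * (1 - u) ^ (p - 1) * X ^ p := by
          rw [Real.mul_rpow (by positivity) hX0.le, Real.mul_rpow (by positivity) hu1.le,
            mul_assoc _ (X ^ (p - 1)), Real.rpow_sub_one hX0.ne', div_mul_cancel₀ _ hX0.ne']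
      _ ≤ _ := by
          gcongr
          linarith
  have hdiv : ∀ u ∈ Ioo (0 : ℝ) 1,
      L * (Z u * (1 - u) ^ (p - 1 - 1 - s * p)) = D u / (1 - u) := by
    intro u hu
    have hu1 : 0 < 1 - u := by linarith [hu.2]
    simp only [hDdef]
    rw [mul_div_assoc, mul_div_assoc, ← Real.rpow_sub_one hu1.ne']
    ring_nf
  have hmD : ∀ u ∈ Ioo (0 : ℝ) 1, |outerPart k s p α β γ u| ≤ D u / (1 - u) := by
    intro u hu
    rw [← hdiv u hu]
    refine hmain u hu _ _ (le_trans ?_ (hA u hu))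
    exact le_mul_of_one_le_right (abs_nonneg _) (le_max_left _ _)
  have hnD : ∀ u ∈ Ioo (0 : ℝ) 1, |innerPart k s p α β γ u| ≤ D u / (1 - u) := by
    intro u hu
    have hu0 := hu.1
    rw [← hdiv u hu, innerPart, abs_neg]
    have e : u ^ γ * outerPart k s p α β γ u = u ^ (s * p - 1) * (u ^ (-α) + u ^ (-β)) *
        ((1 - u ^ γ) * |1 - u ^ γ| ^ (p - 2) * u ^ γ) * Phi k s p u := by
      unfold outerPart; ring
    rw [e]
    refine hmain u hu _ _ (le_trans ?_ (hA u hu))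
    rw [abs_mul, abs_of_pos (by positivity : 0 < u ^ γ)]
    gcongr
    exact le_max_right _ _
  have hmn : ∀ u ∈ Ioo (0 : ℝ) 1,
      |outerPart k s p α β γ u + innerPart k s p α β γ u| ≤ D u := by
    intro u hu
    have hu1 : 0 < 1 - u := by linarith [hu.2]
    have e : D u = L * (Z u * (1 - u) ^ (p - 1 - s * p)) := by
      simp only [hDdef]; ring_nf
    rw [outer_add_inner k s p α β γ u hp, e]
    refine hmain u hu _ _ ?_
    rw [abs_of_nonneg (by positivity)]
    calc |1 - u ^ γ| ^ p ≤ (M * (1 - u) * max 1 (u ^ γ)) ^ p := by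
          gcongr; exact abs_one_sub_rpow_le γ u hu
      _ = _ := by
          rw [Real.mul_rpow (by positivity) (by positivity), Real.mul_rpow (by positivity) hu1.le]
  have hB : ∀ u ∈ Ico (1 / 2 : ℝ) 1, D u ≤ (L * 8) * (1 - u) ^ ((p - s * p) - 1) := by
    intro u hu
    have hu0 : 0 < u := by linarith [hu.1]
    have hu1 : 0 < 1 - u := by linarith [hu.2]
    have h2 : ∀ a : ℝ, 0 < a → u ^ (a - 1) ≤ 2 := by
      intro a ha
      calc u ^ (a - 1) ≤ u ^ (-1 : ℝ) :=
            Real.rpow_le_rpow_of_exponent_ge hu0 hu.2.le (by linarith)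
        _ = 1 / u := by rw [Real.rpow_neg_one, one_div]
        _ ≤ 2 := by rw [div_le_iff₀ hu0]; linarith [hu.1]
    have hZ8 : Z u ≤ 8 := by
      have a1 := h2 _ (sub_pos.2 hα.2)
      have a2 := h2 _ (sub_pos.2 hβ.2)
      have a3 := h2 _ (show 0 < (k : ℝ) + β by linarith [hβ.1])
      have a4 := h2 _ (show 0 < (k : ℝ) + α by linarith [hα.1])
      simp only [hZ]; linarith
    simp only [hDdef]
    rw [mul_assoc L]
    gcongr
  have hom := measurable_outerPart k s p α β γ
  have him : Measurable (innerPart k s p α β γ) := by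
    unfold innerPart
    fun_prop
  obtain ⟨r1, r2, r3⟩ := tendsto_truncated hb (outerPart k s p α β γ) (innerPart k s p α β γ) D
    hom him hD hmD hnD hmn hB
  refine ⟨fun δ hδ => ?_, fun δ hδ => ?_, ?_⟩
  · exact (r1 δ hδ).congr_fun (fun u hu => (profile_inner k s p α β γ δ u hp hγ hu).symm)
      measurableSet_Ioo
  · exact (r2 δ hδ).congr_fun (fun u hu => (profile_outer k s p α β γ δ u hu).symm)
      measurableSet_Ioo
  · have e : ∫ u in Ioo (0 : ℝ) 1, (outerPart k s p α β γ u + innerPart k s p α β γ u) =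
        C1 k s p α β := by
      unfold C1
      rw [← hγ]
      exact setIntegral_congr_fun measurableSet_Ioo
        fun u _ => outer_add_inner k s p α β γ u hp
    rw [e] at r3
    refine r3.congr fun δ => ?_
    congr 1
    · exact setIntegral_congr_fun measurableSet_Ioo
        fun u hu => (profile_inner k s p α β γ δ u hp hγ hu).symm
    · exact setIntegral_congr_fun measurableSet_Ioo
        fun u hu => (profile_outer k s p α β γ δ u hu).symm

/-! ### Uniform convergence -/

/-- The truncated integral at scale `ε`, reduced to the radial one at scale `ε / |x_k|`. -/
theorem truncated_eq
    (d k : ℕ) (s p α β γ ε : ℝ) (hp : 1 ≤ p) (hs : s ∈ Ioo (0 : ℝ) 1)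
    (hk : 1 ≤ k) (hkd : k ≤ d)
    (hα : α ∈ Ioo (-(k : ℝ)) (s * p)) (hβ : β ∈ Ioo (-(k : ℝ)) (s * p))
    (hγ : γ = ((k : ℝ) + α + β - s * p) / p) (hε : 0 < ε)
    (x : EuclideanSpace ℝ (Fin d)) (hx : 0 < pnorm d k x) :
    2 * ∫ y in {y : EuclideanSpace ℝ (Fin d) | ε < |pnorm d k x - pnorm d k y|},
        (pnorm d k x ^ (-γ) - pnorm d k y ^ (-γ)) *
          |pnorm d k x ^ (-γ) - pnorm d k y ^ (-γ)| ^ (p - 2) *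
          ((1 / 2) * ‖x - y‖ ^ (-(d : ℝ) - s * p) *
            (pnorm d k x ^ α * pnorm d k y ^ β + pnorm d k x ^ β * pnorm d k y ^ α)) =
      (Real.pi ^ (((d : ℝ) - (k : ℝ)) / 2) * Real.Gamma (((k : ℝ) + s * p) / 2) /
        Real.Gamma (((d : ℝ) + s * p) / 2)) * pnorm d k x ^ (α + β - s * p) *
        (pnorm d k x ^ (-γ)) ^ (p - 1) *
      ((∫ u in Ioo (0 : ℝ) 1,
          profile p α β γ (ε / pnorm d k x) u * (u ^ ((k : ℝ) - 1) * Phi k s p u)) +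
        ∫ u in Ioo (0 : ℝ) 1,
          profile p α β γ (ε / pnorm d k x) (1 / u) * (u ^ (s * p - 1) * Phi k s p u)) := by
  obtain ⟨i1, i2, -⟩ := radial_limit k s p α β γ hp hs hk hα hβ hγ
  have hσ : 0 < s * p := mul_pos hs.1 (by linarith)
  have hfull := integral_full d k hk hkd s p hσ x hx (profile p α β γ (ε / pnorm d k x))
    (measurable_profile _ _ _ _ _) (i1 _ (div_pos hε hx)) (i2 _ (div_pos hε hx))
  set ρ := pnorm d k x with hρ
  have hSm : MeasurableSet {y : EuclideanSpace ℝ (Fin d) | ε < |ρ - pnorm d k y|} := by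
    have := (continuous_pnorm d k).measurable
    exact measurableSet_lt measurable_const (by fun_prop)
  rw [← integral_indicator hSm, ← integral_const_mul]
  have hpt : ∀ y : EuclideanSpace ℝ (Fin d),
      2 * {y : EuclideanSpace ℝ (Fin d) | ε < |ρ - pnorm d k y|}.indicator (fun y =>
        (ρ ^ (-γ) - pnorm d k y ^ (-γ)) * |ρ ^ (-γ) - pnorm d k y ^ (-γ)| ^ (p - 2) *
          ((1 / 2) * ‖x - y‖ ^ (-(d : ℝ) - s * p) *
            (ρ ^ α * pnorm d k y ^ β + ρ ^ β * pnorm d k y ^ α))) y =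
      (ρ ^ (α + β) * (ρ ^ (-γ)) ^ (p - 1)) *
        (profile p α β γ (ε / ρ) (pnorm d k y / ρ) * ‖x - y‖ ^ (-(d : ℝ) - s * p)) := by
    intro y
    obtain ⟨r, hr0, hr⟩ : ∃ r : ℝ, 0 ≤ r ∧ pnorm d k y = ρ * r :=
      ⟨pnorm d k y / ρ, div_nonneg (pnorm_nonneg d k y) hx.le, by field_simp⟩
    have hcut : ε < |ρ - pnorm d k y| ↔ ε / ρ < |1 - r| := by
      rw [hr, div_lt_iff₀ hx, show ρ - ρ * r = ρ * (1 - r) by ring, abs_mul, abs_of_pos hx,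
        mul_comm]
    have hdiv : pnorm d k y / ρ = r := by rw [hr]; field_simp
    unfold profile
    rw [hdiv]
    by_cases h : ε < |ρ - pnorm d k y|
    · rw [indicator_of_mem (show y ∈ {y | ε < |ρ - pnorm d k y|} from h),
        indicator_of_mem (show r ∈ {r : ℝ | ε / ρ < |1 - r|} from hcut.1 h), hr]
      have hg : 0 < ρ ^ (-γ) := by positivity
      have e1 : ρ ^ (-γ) - (ρ * r) ^ (-γ) = ρ ^ (-γ) * (1 - r ^ (-γ)) := by
        rw [Real.mul_rpow hx.le hr0]; ring
      have e2 : (ρ ^ (-γ)) ^ (p - 1) = ρ ^ (-γ) * (ρ ^ (-γ)) ^ (p - 2) := by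
        rw [show p - 1 = 1 + (p - 2) by ring, Real.rpow_add hg, Real.rpow_one]
      rw [e1, abs_mul, abs_of_pos hg, Real.mul_rpow hg.le (abs_nonneg _), e2,
        Real.mul_rpow hx.le hr0, Real.mul_rpow hx.le hr0, Real.rpow_add hx]
      ring
    · rw [indicator_of_notMem (show y ∉ {y | ε < |ρ - pnorm d k y|} from h),
        indicator_of_notMem (show r ∉ {r : ℝ | ε / ρ < |1 - r|} from fun h' => h (hcut.2 h'))]
      ring
  simp_rw [hpt]
  rw [integral_const_mul, hfull]
  have e3 : ρ ^ (α + β - s * p) = ρ ^ (α + β) * ρ ^ (-(s * p)) := by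
    rw [← Real.rpow_add hx]; ring_nf
  rw [e3]; ring

/-- **Nonlinear ground state representation limit** (Lemma 2.1): with
`γ = (k+α+β-sp)/p`, `ω(x) = |x_k|^{-γ}` and
`k(x,y) = ½ |x-y|^{-d-sp} (|x_k|^α |y_k|^β + |x_k|^β |y_k|^α)`, one has
`2 lim_{ε→0⁺} ∫_{||x_k|-|y_k||>ε} (ω(x)-ω(y))|ω(x)-ω(y)|^{p-2} k(x,y) dy
  = 𝒞(d,s,p,k,α,β) |x_k|^{α+β-sp} ω(x)^{p-1}`,
uniformly on compact subsets of `ℝ^d \ K`. -/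
theorem ground_state_limit
    (d k : ℕ) (s p α β γ : ℝ)
    (hd : 1 ≤ d) (hp : 1 ≤ p) (hs : s ∈ Ioo (0 : ℝ) 1)
    (hk : 1 ≤ k) (hkd : k ≤ d)
    (hα : α ∈ Ioo (-(k : ℝ)) (s * p)) (hβ : β ∈ Ioo (-(k : ℝ)) (s * p))
    (hαβ : α + β ∈ Ioo (-(k : ℝ)) (s * p))
    (hγ : γ = ((k : ℝ) + α + β - s * p) / p)
    (ω : EuclideanSpace ℝ (Fin d) → ℝ)
    (hω : ∀ x, ω x = pnorm d k x ^ (-γ))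
    (kern : EuclideanSpace ℝ (Fin d) → EuclideanSpace ℝ (Fin d) → ℝ)
    (hkern : ∀ x y, kern x y = (1 / 2) * ‖x - y‖ ^ (-(d : ℝ) - s * p) *
      (pnorm d k x ^ α * pnorm d k y ^ β + pnorm d k x ^ β * pnorm d k y ^ α))
    (KS : Set (EuclideanSpace ℝ (Fin d)))
    (hKS : IsCompact KS) (hKSK : KS ⊆ {x | pnorm d k x ≠ 0}) :
    TendstoUniformlyOn
      (fun (ε : ℝ) (x : EuclideanSpace ℝ (Fin d)) =>
        2 * ∫ y in {y : EuclideanSpace ℝ (Fin d) | ε < |pnorm d k x - pnorm d k y|},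
          (ω x - ω y) * |ω x - ω y| ^ (p - 2) * kern x y)
      (fun x => CC d k s p α β * pnorm d k x ^ (α + β - s * p) * ω x ^ (p - 1))
      (𝓝[>] (0 : ℝ)) KS := by

  have hpos : ∀ x ∈ KS, 0 < pnorm d k x := fun x hx =>
    lt_of_le_of_ne (pnorm_nonneg d k x) (Ne.symm (hKSK hx))
  obtain ⟨-, -, hlim⟩ := radial_limit k s p α β γ hp hs hk hα hβ hγ
  set J : ℝ → ℝ := fun δ =>
    (∫ u in Ioo (0 : ℝ) 1, profile p α β γ δ u * (u ^ ((k : ℝ) - 1) * Phi k s p u)) +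
      ∫ u in Ioo (0 : ℝ) 1, profile p α β γ δ (1 / u) * (u ^ (s * p - 1) * Phi k s p u) with hJ
  set c : ℝ := Real.pi ^ (((d : ℝ) - (k : ℝ)) / 2) * Real.Gamma (((k : ℝ) + s * p) / 2) /
    Real.Gamma (((d : ℝ) + s * p) / 2) with hc
  set A : EuclideanSpace ℝ (Fin d) → ℝ := fun x =>
    c * pnorm d k x ^ (α + β - s * p) * (pnorm d k x ^ (-γ)) ^ (p - 1) with hA
  rcases KS.eq_empty_or_nonempty with rfl | hne
  · exact tendstoUniformlyOn_empty
  -- on `KS` the scale `|x_k|` is bounded below and the prefactor is bounded above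
  obtain ⟨x₀, hx₀, hmin⟩ := hKS.exists_isMinOn hne (continuous_pnorm d k).continuousOn
  have hAc : ContinuousOn A KS := by
    have hc1 : ContinuousOn (pnorm d k) KS := (continuous_pnorm d k).continuousOn
    have hc2 : ContinuousOn (fun x => pnorm d k x ^ (-γ)) KS :=
      hc1.rpow_const fun x hx => Or.inl (hpos x hx).ne'
    refine (continuousOn_const.mul (hc1.rpow_const fun x hx => Or.inl (hpos x hx).ne')).mul
      (hc2.rpow_const fun x hx => Or.inl (Real.rpow_pos_of_pos (hpos x hx) _).ne')
  obtain ⟨B, hB⟩ := hKS.exists_bound_of_continuousOn hAc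
  have hρ₀ := hpos x₀ hx₀
  rw [Metric.tendstoUniformlyOn_iff]
  intro η hη
  have hη' : 0 < η / (|B| + 1) := by positivity
  obtain ⟨δ₀, hδ₀, hball⟩ := Metric.mem_nhdsWithin_iff.1
    (hlim (Metric.ball_mem_nhds _ hη'))
  have hsmall : ∀ᶠ ε : ℝ in 𝓝[>] 0, ε < δ₀ * pnorm d k x₀ :=
    nhdsWithin_le_nhds (Iio_mem_nhds (by positivity))
  filter_upwards [hsmall, self_mem_nhdsWithin] with ε hε hε0 x hx
  have hε0 : 0 < ε := hε0
  have hρ := hpos x hx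
  have hle : pnorm d k x₀ ≤ pnorm d k x := hmin hx
  have hδ : ε / pnorm d k x < δ₀ := by
    rw [div_lt_iff₀ hρ]
    exact hε.trans_le (by gcongr)
  have hJx : |J (ε / pnorm d k x) - C1 k s p α β| < η / (|B| + 1) := by
    have : ε / pnorm d k x ∈ Metric.ball (0 : ℝ) δ₀ ∩ Ioi 0 := by
      refine ⟨?_, div_pos hε0 hρ⟩
      rw [Metric.mem_ball, dist_zero_right, Real.norm_eq_abs, abs_of_pos (div_pos hε0 hρ)]
      exact hδ
    have := hball this
    rwa [mem_preimage, Metric.mem_ball, Real.dist_eq] at this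
  have hT := truncated_eq d k s p α β γ ε hp hs hk hkd hα hβ hγ hε0 x hρ
  simp only [hω, hkern]
  rw [hT]
  have e : CC d k s p α β * pnorm d k x ^ (α + β - s * p) * (pnorm d k x ^ (-γ)) ^ (p - 1) =
      A x * C1 k s p α β := by
    simp only [hA, hc, CC]; ring
  rw [e]
  change dist (A x * C1 k s p α β) (A x * J (ε / pnorm d k x)) < η
  rw [dist_comm, Real.dist_eq, ← mul_sub, abs_mul]
  have hAx : |A x| ≤ |B| + 1 := by
    have := hB x hx
    rw [Real.norm_eq_abs] at this
    linarith [le_abs_self B]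
  calc |A x| * |J (ε / pnorm d k x) - C1 k s p α β|
      ≤ (|B| + 1) * |J (ε / pnorm d k x) - C1 k s p α β| := by gcongr
    _ < (|B| + 1) * (η / (|B| + 1)) := by gcongr
    _ = η := by field_simp
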